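/- arXiv:1812.07629 — 4 statements merged into one kernel-verified Lean document; each statement's English description precedes it below -/
import Mathlib

section
/- Let Ω ⊆ ℝ^d be open and let T_1, …, T_d be ℝ^d-valued Radon measures on Ω with polar decompositions T_i = T⃗_i ‖T_i‖, such that for each i the divergence div T_i = ∑_{j=1}^d ∂_j (T_i)_j is representable by a signed Radon measure on Ω (so each T_i is a one-dimensional normal current). Let σ be a positive Radon measure on Ω such that: (i) σ ≪ ‖T_i‖ for every i = 1, …, d, and (ii) span{T⃗_1(x), …, T⃗_d(x)} = ℝ^d for σ-almost every x ∈ Ω. Then σ ≪ H^κ for every 0 ≤ κ < d. -/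
/-!
Near a point of `Ω` all the measures in play are dominated by one finite measure `M`, the sum of
the `‖Tᵢ‖` and of the total variations of the `div Tᵢ`. Writing `Tᵢ = Fᵢ M`, the hypothesis on the
divergences becomes `|∫ dφ(Fᵢ) dM| ≤ ∫ |φ| mᵢ dM` with `Fᵢ, mᵢ ∈ L¹(M)`. It is enough to show that
`M (closedBall x r) ≤ C r ^ κ` for small `r` at `M`-almost every `x` where the `Fᵢ x` span `ℝ^d`:
by the mass distribution principle (`null_of_growth`) the set of such points meets every
`ℋ^κ`-null set in an `M`-null set, and `σ`-a.e. point is such a point.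

At a common Lebesgue point `x` of the `Fᵢ` and `mᵢ`, test with `φ(y) = ψ((y - x) / r)`. The
left-hand side carries a factor `1 / r` that the right-hand side lacks, and `Fᵢ` may be replaced by
the constant `Fᵢ x` up to a small error, so
`∫ dψ((y - x) / r)(Fᵢ x) dM(y) = o(M (closedBall x r))` (`isLittleO_integral_fderiv`). Since the
vectors `Fᵢ x` span, the same holds for every constant vector in place of `Fᵢ x`; hence
`∫ (div X)((y - x) / r) dM(y) = o(M (closedBall x r))` for every smooth vector field `X` supported
in the unit ball.

For `X` take a multiple of the truncated field `z ↦ z (‖z‖² + θ²) ^ (-d / 2)`, a regularization of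
the field `z / ‖z‖ ^ d`, which is divergence free away from the origin. Its divergence is at least
`-1` everywhere and at least `c θ ^ (-d)` on the ball of radius `θ`, with `c` independent of `θ`
(`exists_test_field`). This gives
`M (closedBall x (θ r)) ≤ (2 / c) θ ^ d M (closedBall x r)` for small `r` (`eventually_decay`).
As `κ < d`, some `θ` has `(2 / c) θ ^ d ≤ θ ^ κ`, and iterating over the scales `θ ^ n r₀` yields
the bound `M (closedBall x r) ≤ C r ^ κ` (`growth_of_decay`, `ae_growth`).
-/

open MeasureTheory Metric Filter
open scoped ENNReal RealInnerProductSpace Topology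

/-! ### Growth of balls and Hausdorff measure -/

/-- **Mass distribution principle.** A measure whose balls of small radius `r` have mass at most
`C r ^ κ` at each point of `A`, with `C` depending on the point, vanishes on the `ℋ^κ`-null subsets
of `A`. Neither set need be measurable. -/
theorem null_of_growth {X : Type*} [MetricSpace X] [MeasurableSpace X] [BorelSpace X]
    (M : Measure X) {κ : ℝ} (hκ : 0 < κ) (A E : Set X)
    (hA : ∀ x ∈ A, ∃ C r₀ : ℝ, 0 < r₀ ∧ ∀ r, 0 < r → r ≤ r₀ →
      M (closedBall x r) ≤ ENNReal.ofReal (C * r ^ κ))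
    (hE : μH[κ] E = 0) : M (A ∩ E) = 0 := by
  -- the points of growth, with constant and radius made uniform
  let B : ℕ → Set X := fun n => {x | ∀ r, 0 < r → r ≤ 1 / ((n : ℝ) + 1) →
      M (closedBall x r) ≤ ENNReal.ofReal ((n + 1) * r ^ κ)}
  have hAB : A ∩ E ⊆ ⋃ n, (E ∩ B n) := by
    rintro x ⟨hxA, hxE⟩
    obtain ⟨C, r₀, hr₀, h⟩ := hA x hxA
    obtain ⟨n₁, hn₁⟩ := exists_nat_one_div_lt hr₀
    obtain ⟨n₂, hn₂⟩ := exists_nat_ge C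
    refine Set.mem_iUnion.2 ⟨max n₁ n₂, hxE, fun r hr hrn => ?_⟩
    have h1 : r ≤ r₀ := by
      refine hrn.trans (le_trans ?_ hn₁.le)
      gcongr
      exact le_max_left _ _
    refine (h r hr h1).trans (ENNReal.ofReal_le_ofReal ?_)
    gcongr
    have : (n₂ : ℝ) ≤ (max n₁ n₂ : ℕ) := by exact_mod_cast le_max_right _ _
    linarith
  refine measure_mono_null hAB (measure_iUnion_null fun n => ?_)
  -- a set of small diameter `δ` meeting `B n` lies in `closedBall x r` for every `r ≥ δ`; the
  -- limit `r ↓ δ` covers the case `δ = 0`, where the growth bound does not apply to `r = δ`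
  have key : OuterMeasure.restrict (B n) M.toOuterMeasure ≤
      OuterMeasure.mkMetric (ENNReal.ofReal (n + 1) • fun r : ℝ≥0∞ => r ^ κ) := by
    refine OuterMeasure.le_mkMetric _ _ (ENNReal.ofReal (1 / ((n : ℝ) + 2)))
      (ENNReal.ofReal_pos.2 (by positivity)) fun s hs => ?_
    rw [OuterMeasure.restrict_apply]
    rcases (s ∩ B n).eq_empty_or_nonempty with h0 | ⟨x, hxs, hxB⟩
    · simp [h0]
    have hfin : ediam s ≠ ⊤ := ne_top_of_le_ne_top ENNReal.ofReal_ne_top hs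
    set δ := diam s with hδ
    have hds : ediam s = ENNReal.ofReal δ := (ENNReal.ofReal_toReal hfin).symm
    have hδ0 : 0 ≤ δ := diam_nonneg
    have hδn : δ ≤ 1 / ((n : ℝ) + 2) := by
      rw [hds] at hs
      exact (ENNReal.ofReal_le_ofReal_iff (by positivity)).1 hs
    have hδn' : δ < 1 / ((n : ℝ) + 1) := by
      refine hδn.trans_lt ?_
      gcongr
      linarith
    have hb : ∀ r, δ ≤ r → s ∩ B n ⊆ closedBall x r := fun r hr y hy =>
      (dist_le_diam_of_mem' hfin hy.1 hxs).trans hr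
    have hlim : Tendsto (fun r : ℝ => ENNReal.ofReal ((n + 1) * r ^ κ)) (𝓝[>] δ)
        (𝓝 (ENNReal.ofReal ((n + 1) * δ ^ κ))) := by
      refine (ENNReal.continuous_ofReal.tendsto _).comp ?_
      refine Tendsto.mono_left ?_ nhdsWithin_le_nhds
      exact ((Real.continuous_rpow_const hκ.le).tendsto δ).const_mul _
    have hle : M (s ∩ B n) ≤ ENNReal.ofReal ((n + 1) * δ ^ κ) := by
      refine ge_of_tendsto hlim ?_
      filter_upwards [Ioo_mem_nhdsGT hδn'] with r hr
      exact (measure_mono (hb r hr.1.le)).trans (hxB r (hδ0.trans_lt hr.1) hr.2.le)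
    refine hle.trans (le_of_eq ?_)
    rw [hds, ENNReal.ofReal_mul (by positivity), ← ENNReal.ofReal_rpow_of_nonneg hδ0 hκ.le]
    rfl
  have h2 := key E
  rw [OuterMeasure.restrict_apply, OuterMeasure.mkMetric_smul _ ENNReal.ofReal_ne_top] at h2
  · have h3 : OuterMeasure.mkMetric (fun r : ℝ≥0∞ => r ^ κ) E = 0 := by
      rw [OuterMeasure.coe_mkMetric]; exact hE
    rw [smul_apply, h3] at h2
    simpa using h2
  · exact (ENNReal.ofReal_pos.2 (by positivity)).ne.symm

/-- A monotone function that shrinks by the factor `θ ^ κ` whenever its argument shrinks by the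
factor `θ` is `O(r ^ κ)`. -/
theorem growth_of_decay {m : ℝ → ℝ} (hm : Monotone m) (hm0 : ∀ r, 0 ≤ m r) {κ θ r₀ : ℝ} (hκ : 0 < κ)
    (hθ : 0 < θ) (hθ1 : θ < 1) (hr₀ : 0 < r₀)
    (h : ∀ r, 0 < r → r ≤ r₀ → m (θ * r) ≤ θ ^ κ * m r) :
    ∃ C : ℝ, ∀ r, 0 < r → r ≤ r₀ → m r ≤ C * r ^ κ := by
  have hit : ∀ n : ℕ, m (θ ^ n * r₀) ≤ (θ ^ n) ^ κ * m r₀ := by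
    intro n
    induction n with
    | zero => simp
    | succ n ih =>
      have h1 : θ ^ n ≤ 1 := pow_le_one₀ hθ.le hθ1.le
      have := h (θ ^ n * r₀) (by positivity) (by nlinarith)
      calc m (θ ^ (n + 1) * r₀) = m (θ * (θ ^ n * r₀)) := by ring_nf
        _ ≤ θ ^ κ * m (θ ^ n * r₀) := this
        _ ≤ θ ^ κ * ((θ ^ n) ^ κ * m r₀) := by gcongr
        _ = _ := by rw [pow_succ, Real.mul_rpow (by positivity) hθ.le]; ring
  refine ⟨m r₀ / (θ * r₀) ^ κ, fun r hr hrr => ?_⟩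
  obtain ⟨n, hn1, hn2⟩ := exists_nat_pow_near_of_lt_one (x := r / r₀) (by positivity)
    ((div_le_one hr₀).2 hrr) hθ hθ1
  rw [lt_div_iff₀ hr₀] at hn1
  rw [div_le_iff₀ hr₀] at hn2
  have h3 : θ ^ n ≤ r / (θ * r₀) := by
    rw [le_div_iff₀ (by positivity)]
    rw [pow_succ] at hn1; nlinarith
  calc m r ≤ m (θ ^ n * r₀) := hm hn2
    _ ≤ (θ ^ n) ^ κ * m r₀ := hit n
    _ ≤ (r / (θ * r₀)) ^ κ * m r₀ := by
      gcongr
      exact hm0 _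
    _ = _ := by rw [Real.div_rpow hr.le (by positivity)]; ring

/-! ### The radial test field -/

theorem sum_coord_fderiv {d : ℕ} (L : EuclideanSpace ℝ (Fin d) →L[ℝ] ℝ)
    (z : EuclideanSpace ℝ (Fin d)) :
    ∑ j : Fin d, L (EuclideanSpace.single j 1) * z j = L z := by
  have h : z = ∑ j : Fin d, z j • EuclideanSpace.single j (1 : ℝ) := by
    have := (EuclideanSpace.basisFun (Fin d) ℝ).sum_repr z
    simpa using this.symm
  conv_rhs => rw [h]
  rw [map_sum]
  exact Finset.sum_congr rfl fun j _ => by rw [map_smul, smul_eq_mul, mul_comm]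

/-- The divergence of the radial field `y ↦ w y • y` is `d w + dw(y)`. -/
theorem divergence_radial {d : ℕ} {w : EuclideanSpace ℝ (Fin d) → ℝ}
    {z : EuclideanSpace ℝ (Fin d)} (hw : DifferentiableAt ℝ w z) :
    ∑ j : Fin d, fderiv ℝ (fun y : EuclideanSpace ℝ (Fin d) => y j * w y) z
      (EuclideanSpace.single j 1) = d * w z + fderiv ℝ w z z := by
  have h1 : ∀ j : Fin d, fderiv ℝ (fun y : EuclideanSpace ℝ (Fin d) => y j * w y) z
      (EuclideanSpace.single j 1) = fderiv ℝ w z (EuclideanSpace.single j 1) * z j + w z := by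
    intro j
    have h2 : HasFDerivAt (fun y : EuclideanSpace ℝ (Fin d) => y j)
      (EuclideanSpace.proj j : EuclideanSpace ℝ (Fin d) →L[ℝ] ℝ) z :=
      (EuclideanSpace.proj j : EuclideanSpace ℝ (Fin d) →L[ℝ] ℝ).hasFDerivAt
    have h3 : fderiv ℝ (fun y : EuclideanSpace ℝ (Fin d) => y j * w y) z = _ :=
      (h2.mul hw.hasFDerivAt).fderiv
    rw [h3]
    simp
    ring
  rw [Finset.sum_congr rfl fun j _ => h1 j, Finset.sum_add_distrib, sum_coord_fderiv]
  simp [add_comm]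

/-- A smooth field supported in the unit ball whose divergence is at least `-1` everywhere and at
least `c θ ^ (-d)` on the ball of radius `θ`, where `c` does not depend on `θ`. With a cutoff `f`,
it is a multiple of `X z = f z (‖z‖² + θ²) ^ (-d / 2) z`: where `f` is constant the divergence is
`d θ² (‖z‖² + θ²) ^ (-d / 2 - 1) f z ≥ 0`, and the term from the derivative of `f` is bounded
uniformly in `θ`, because that derivative vanishes for `‖z‖ < 1 / 2`. -/
theorem exists_test_field {d : ℕ} (hd : 0 < d) : ∃ c : ℝ, 0 < c ∧ ∀ θ : ℝ, 0 < θ → θ < 1 / 2 →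
    ∃ X : Fin d → EuclideanSpace ℝ (Fin d) → ℝ,
      (∀ j, ContDiff ℝ (⊤ : ℕ∞) (X j)) ∧ (∀ j, tsupport (X j) ⊆ closedBall 0 1) ∧
      (∀ z, -1 ≤ ∑ j : Fin d, fderiv ℝ (X j) z (EuclideanSpace.single j 1)) ∧
      ∀ z ∈ closedBall (0 : EuclideanSpace ℝ (Fin d)) θ,
        c * θ ^ (-(d : ℝ)) ≤ ∑ j : Fin d, fderiv ℝ (X j) z (EuclideanSpace.single j 1) := by
  let f : ContDiffBump (0 : EuclideanSpace ℝ (Fin d)) := ⟨1 / 2, 1, by norm_num, by norm_num⟩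
  have hfc : ContDiff ℝ (⊤ : ℕ∞) f := f.contDiff
  have hfd : Differentiable ℝ f := hfc.differentiable (by simp)
  -- a bound for the derivative of the cutoff
  obtain ⟨C₀, hC₀⟩ : ∃ C, ∀ z, ‖fderiv ℝ f z‖ ≤ C :=
    (hfc.continuous_fderiv (by simp)).bounded_above_of_compact_support
      (f.hasCompactSupport.fderiv ℝ)
  have hC₀0 : 0 ≤ C₀ := (norm_nonneg _).trans (hC₀ 0)
  set p : ℝ := -((d : ℝ) / 2) with hp
  have hp0 : p ≤ 0 := by rw [hp]; simp; positivity
  set C' : ℝ := C₀ * (1 / 4 : ℝ) ^ p + 1 with hC'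
  have hC'0 : 0 < C' := by positivity
  refine ⟨d * 2 ^ (p - 1) / C', by positivity, fun θ hθ hθ2 => ?_⟩
  set q : EuclideanSpace ℝ (Fin d) → ℝ := fun z => (‖z‖ ^ 2 + θ ^ 2) ^ p with hq
  have hpos : ∀ z : EuclideanSpace ℝ (Fin d), 0 < ‖z‖ ^ 2 + θ ^ 2 := fun z => by positivity
  have hqc : ContDiff ℝ (⊤ : ℕ∞) q :=
    ((contDiff_norm_sq ℝ).add contDiff_const).rpow_const_of_ne fun z => (hpos z).ne'
  have hqd : Differentiable ℝ q := hqc.differentiable (by simp)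
  have hq' : ∀ z, fderiv ℝ q z z = p * (‖z‖ ^ 2 + θ ^ 2) ^ (p - 1) * (2 * ‖z‖ ^ 2) := by
    intro z
    have h1 : HasFDerivAt (fun z : EuclideanSpace ℝ (Fin d) => ‖z‖ ^ 2 + θ ^ 2)
        (2 • (innerSL ℝ z)) z := (hasStrictFDerivAt_norm_sq z).hasFDerivAt.add_const _
    have h2 := h1.rpow_const (p := p) (Or.inl (hpos z).ne')
    rw [hq, h2.fderiv]
    simp [innerSL_apply_apply]
  set w : EuclideanSpace ℝ (Fin d) → ℝ := fun z => C'⁻¹ * (f z * q z) with hw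
  have hwc : ContDiff ℝ (⊤ : ℕ∞) w := contDiff_const.mul (hfc.mul hqc)
  have hwd : Differentiable ℝ w := hwc.differentiable (by simp)
  have hdiv : ∀ z, d * w z + fderiv ℝ w z z =
      C'⁻¹ * (f z * (d * θ ^ 2 * (‖z‖ ^ 2 + θ ^ 2) ^ (p - 1)) + fderiv ℝ f z z * q z) := by
    intro z
    have h1 : fderiv ℝ w z z = C'⁻¹ * (f z * fderiv ℝ q z z + fderiv ℝ f z z * q z) := by
      have h0 : fderiv ℝ w z = _ :=
        (((hfd z).hasFDerivAt.mul (hqd z).hasFDerivAt).const_mul C'⁻¹).fderiv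
      rw [h0]
      simp only [smul_apply, add_apply, smul_eq_mul]
      ring
    have h2 : q z = (‖z‖ ^ 2 + θ ^ 2) ^ (p - 1) * (‖z‖ ^ 2 + θ ^ 2) := by
      rw [hq, Real.rpow_sub_one (hpos z).ne']
      field_simp
    rw [h1, hq']
    simp only [hw]
    have h3 : (d : ℝ) = - 2 * p := by rw [hp]; ring
    rw [h3]
    rw [h2]
    ring
  -- the cutoff is constant on the ball of radius `1 / 2`
  have hcut : ∀ z, z ∈ ball (0 : EuclideanSpace ℝ (Fin d)) (1 / 2) → fderiv ℝ f z = 0 := by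
    intro z hz
    have h1 : (f : EuclideanSpace ℝ (Fin d) → ℝ) =ᶠ[𝓝 z] fun _ => 1 :=
      f.eventuallyEq_one_of_mem_ball hz
    rw [h1.fderiv_eq]
    simp
  refine ⟨fun j z => z j * w z, fun j => ?_, fun j => ?_, fun z => ?_, fun z hz => ?_⟩
  · exact ((EuclideanSpace.proj j : EuclideanSpace ℝ (Fin d) →L[ℝ] ℝ).contDiff).mul hwc
  · refine subset_trans ?_ (f.tsupport_eq.subset)
    refine closure_mono fun z hz hfz => hz ?_
    simp only [hw]
    rw [hfz]; simp
  · rw [divergence_radial (hwd z), hdiv z]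
    have h1 : -C' ≤ fderiv ℝ f z z * q z := by
      by_cases hz : z ∈ ball (0 : EuclideanSpace ℝ (Fin d)) (1 / 2)
      · rw [hcut z hz]; simp [hC'0.le]
      by_cases hz1 : ‖z‖ ≤ 1
      · have hz' : 1 / 2 ≤ ‖z‖ := by simpa using hz
        have h2 : q z ≤ (1 / 4 : ℝ) ^ p := by
          refine Real.rpow_le_rpow_of_nonpos (by norm_num) ?_ hp0
          nlinarith [sq_nonneg θ]
        have h3 : |fderiv ℝ f z z| ≤ C₀ := by
          calc |fderiv ℝ f z z| ≤ ‖fderiv ℝ f z‖ * ‖z‖ := (fderiv ℝ f z).le_opNorm z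
            _ ≤ C₀ * 1 := by gcongr; exact hC₀ z
            _ = C₀ := mul_one _
        have h4 : 0 ≤ q z := (Real.rpow_pos_of_pos (hpos z) _).le
        have h5 : |fderiv ℝ f z z * q z| ≤ C₀ * (1 / 4 : ℝ) ^ p := by
          rw [abs_mul, abs_of_nonneg h4]
          gcongr
        linarith [(abs_le.1 h5).1]
      · have h2 : fderiv ℝ f z = 0 := by
          by_contra hne
          have := (support_fderiv_subset ℝ (f := f)) hne
          rw [f.tsupport_eq] at this
          exact hz1 (by simpa using this)
        rw [h2]; simp [hC'0.le]
    have h2 : 0 ≤ f z * (d * θ ^ 2 * (‖z‖ ^ 2 + θ ^ 2) ^ (p - 1)) := by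
      have := f.nonneg' z
      have := hpos z
      positivity
    calc -1 = C'⁻¹ * (-C') := by field_simp
      _ ≤ _ := by gcongr; linarith
  · rw [divergence_radial (hwd z), hdiv z]
    have hz' : ‖z‖ ≤ θ := by simpa using hz
    have hzb : z ∈ ball (0 : EuclideanSpace ℝ (Fin d)) (1 / 2) := by simp; linarith
    rw [hcut z hzb, f.one_of_mem_closedBall (ball_subset_closedBall hzb)]
    have h1 : (2 * θ ^ 2) ^ (p - 1) ≤ (‖z‖ ^ 2 + θ ^ 2) ^ (p - 1) := by
      refine Real.rpow_le_rpow_of_nonpos (hpos z) ?_ (by linarith)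
      nlinarith [norm_nonneg z]
    have h2 : θ ^ 2 * (2 * θ ^ 2) ^ (p - 1) = 2 ^ (p - 1) * θ ^ (-(d : ℝ)) := by
      rw [Real.mul_rpow (by norm_num) (by positivity), Real.rpow_sub_one (x := θ ^ 2) (by positivity),
        ← Real.rpow_natCast θ 2, ← Real.rpow_mul hθ.le]
      have : ((2 : ℕ) : ℝ) * p = -d := by rw [hp]; push_cast; ring
      rw [this]
      field_simp
    calc d * 2 ^ (p - 1) / C' * θ ^ (-(d : ℝ)) = C'⁻¹ * (d * (θ ^ 2 * (2 * θ ^ 2) ^ (p - 1))) := by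
          rw [h2]; field_simp
      _ ≤ C'⁻¹ * (d * (θ ^ 2 * (‖z‖ ^ 2 + θ ^ 2) ^ (p - 1))) := by gcongr
      _ = _ := by rw [zero_apply]; ring

/-! ### Blow-up at Lebesgue points -/

/-- The blow-up estimate at a Lebesgue point `x` of the field `F` and of the bound `m` on its
divergence: testing with `φ y = ψ ((y - x) / r)` bounds `∫ dψ((y - x) / r)(F y) dM(y)` by a multiple
of `r M (closedBall x r)`, and replacing `F y` by `F x` costs `o(M (closedBall x r))`. -/
theorem isLittleO_integral_fderiv {d : ℕ} {M : Measure (EuclideanSpace ℝ (Fin d))}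
    [IsFiniteMeasure M] {U : Set (EuclideanSpace ℝ (Fin d))} (hU : IsOpen U)
    {F : EuclideanSpace ℝ (Fin d) → EuclideanSpace ℝ (Fin d)} (hF : Integrable F M)
    {m : EuclideanSpace ℝ (Fin d) → ℝ} (hm : Integrable m M) (hm0 : ∀ y, 0 ≤ m y)
    (hdiv : ∀ φ : EuclideanSpace ℝ (Fin d) → ℝ, ContDiff ℝ (⊤ : ℕ∞) φ → HasCompactSupport φ →
      tsupport φ ⊆ U → |∫ y, fderiv ℝ φ y (F y) ∂M| ≤ ∫ y, |φ y| * m y ∂M)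
    {x : EuclideanSpace ℝ (Fin d)} (hx : x ∈ U)
    (hFx : Tendsto (fun r => ⨍ y in closedBall x r, ‖F y - F x‖ ∂M) (𝓝[>] 0) (𝓝 0))
    (hmx : Tendsto (fun r => ⨍ y in closedBall x r, m y ∂M) (𝓝[>] 0) (𝓝 (m x)))
    {ψ : EuclideanSpace ℝ (Fin d) → ℝ} (hψ : ContDiff ℝ (⊤ : ℕ∞) ψ)
    (hψs : tsupport ψ ⊆ closedBall 0 1) :
    (fun r : ℝ => ∫ y, fderiv ℝ ψ (r⁻¹ • (y - x)) (F x) ∂M) =o[𝓝[>] 0]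
      fun r => M.real (closedBall x r) := by
  have hψc : HasCompactSupport ψ := HasCompactSupport.of_support_subset_isCompact
    (isCompact_closedBall 0 1) ((subset_tsupport ψ).trans hψs)
  have hψ'c : Continuous (fderiv ℝ ψ) := hψ.continuous_fderiv (by simp)
  obtain ⟨A, hA⟩ : ∃ C, ∀ z, ‖ψ z‖ ≤ C :=
    hψ.continuous.bounded_above_of_compact_support hψc
  obtain ⟨L, hL⟩ : ∃ C, ∀ z, ‖fderiv ℝ ψ z‖ ≤ C :=
    hψ'c.bounded_above_of_compact_support (hψc.fderiv ℝ)
  have hA0 : 0 ≤ A := (norm_nonneg _).trans (hA 0)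
  have hL0 : 0 ≤ L := (norm_nonneg _).trans (hL 0)
  have hout : ∀ r : ℝ, 0 < r → ∀ y, y ∉ closedBall x r → r⁻¹ • (y - x) ∉ tsupport ψ := by
    intro r hr y hy hmem
    apply hy
    have := hψs hmem
    rw [mem_closedBall_zero_iff, norm_smul, norm_inv, Real.norm_of_nonneg hr.le,
      inv_mul_le_iff₀ hr, mul_one] at this
    rwa [mem_closedBall, dist_eq_norm]
  rw [Asymptotics.isLittleO_iff]
  intro ε hε
  have e1 : ∀ᶠ r in 𝓝[>] (0 : ℝ), ⨍ y in closedBall x r, ‖F y - F x‖ ∂M < ε / (2 * (L + 1)) :=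
    hFx.eventually (gt_mem_nhds (by positivity))
  have e2 : ∀ᶠ r in 𝓝[>] (0 : ℝ), ⨍ y in closedBall x r, m y ∂M < m x + 1 :=
    hmx.eventually (gt_mem_nhds (by linarith))
  have e3 : ∀ᶠ r in 𝓝[>] (0 : ℝ), closedBall x r ⊆ U := by
    obtain ⟨δ, hδ, hδU⟩ := Metric.isOpen_iff.1 hU x hx
    filter_upwards [Ioo_mem_nhdsGT hδ] with r hr
    exact (closedBall_subset_ball hr.2).trans hδU
  have e4 : ∀ᶠ r in 𝓝[>] (0 : ℝ), r * (A * (m x + 1)) < ε / 2 := by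
    have : Tendsto (fun r : ℝ => r * (A * (m x + 1))) (𝓝[>] 0) (𝓝 (0 * (A * (m x + 1)))) :=
      (tendsto_id.mono_left nhdsWithin_le_nhds).mul_const _
    rw [zero_mul] at this
    exact this.eventually (gt_mem_nhds (by positivity))
  filter_upwards [e1, e2, e3, e4, self_mem_nhdsWithin] with r h1 h2 h3 h4 hr
  have hr : 0 < r := hr
  set μB := M.real (closedBall x r) with hμB
  have hμB0 : 0 ≤ μB := measureReal_nonneg
  have havg : ∀ g : EuclideanSpace ℝ (Fin d) → ℝ, (∫ y in closedBall x r, g y ∂M) =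
      μB * ⨍ y in closedBall x r, g y ∂M := fun g => by
    rw [hμB, ← smul_eq_mul, measure_smul_setAverage g (measure_ne_top M _)]
  set φ : EuclideanSpace ℝ (Fin d) → ℝ := fun y => ψ (r⁻¹ • (y - x)) with hφ
  have hφc : ContDiff ℝ (⊤ : ℕ∞) φ := hψ.comp (by fun_prop)
  have hφ' : ∀ y, fderiv ℝ φ y = r⁻¹ • fderiv ℝ ψ (r⁻¹ • (y - x)) := by
    intro y
    have ha : HasFDerivAt (fun y : EuclideanSpace ℝ (Fin d) => r⁻¹ • (y - x))
        (r⁻¹ • ContinuousLinearMap.id ℝ _) y := ((hasFDerivAt_id y).sub_const x).const_smul r⁻¹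
    have hb := ((hψ.differentiable (by simp)) (r⁻¹ • (y - x))).hasFDerivAt.comp y ha
    have hb' : fderiv ℝ φ y = _ := hb.fderiv
    rw [hb']
    ext v
    simp
  have hφs : Function.support φ ⊆ closedBall x r := fun y hy => by
    by_contra hn
    exact hout r hr y hn (subset_tsupport _ hy)
  have hφt : tsupport φ ⊆ closedBall x r := closure_minimal hφs isClosed_closedBall
  have hd := hdiv φ hφc
    (HasCompactSupport.of_support_subset_isCompact (isCompact_closedBall x r) hφs) (hφt.trans h3)
  have hR : ∫ y, |φ y| * m y ∂M ≤ A * (μB * (m x + 1)) := by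
    have hz : ∀ y, y ∉ closedBall x r → |φ y| * m y = 0 := fun y hy => by
      have : φ y = 0 := by by_contra hn; exact hy (hφs hn)
      simp [this]
    rw [← setIntegral_eq_integral_of_forall_compl_eq_zero hz]
    calc ∫ y in closedBall x r, |φ y| * m y ∂M ≤ ∫ y in closedBall x r, A * m y ∂M := by
          refine integral_mono_of_nonneg (Eventually.of_forall fun y => ?_)
            (hm.integrableOn.const_mul A) (Eventually.of_forall fun y => ?_)
          · exact mul_nonneg (abs_nonneg _) (hm0 y)
          · exact mul_le_mul_of_nonneg_right (hA _) (hm0 y)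
      _ = A * (μB * ⨍ y in closedBall x r, m y ∂M) := by rw [integral_const_mul, havg]
      _ ≤ _ := by gcongr
  have hcont : Continuous fun y => fderiv ℝ ψ (r⁻¹ • (y - x)) := hψ'c.comp (by fun_prop)
  have hint : ∀ H : EuclideanSpace ℝ (Fin d) → EuclideanSpace ℝ (Fin d), Integrable H M →
      Integrable (fun y => fderiv ℝ ψ (r⁻¹ • (y - x)) (H y)) M := by
    intro H hH
    refine (hH.norm.const_mul L).mono' ?_ (Eventually.of_forall fun y => ?_)
    · exact (hcont.aestronglyMeasurable.prodMk hH.aestronglyMeasurable |>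
        isBoundedBilinearMap_apply.continuous.comp_aestronglyMeasurable)
    · exact ((fderiv ℝ ψ _).le_opNorm _).trans (by gcongr; exact hL _)
  have hsub : Integrable (fun y => F y - F x) M := hF.sub (integrable_const _)
  have hmain : |∫ y, fderiv ℝ ψ (r⁻¹ • (y - x)) (F y) ∂M| ≤ r * (A * (μB * (m x + 1))) := by
    have : ∫ y, fderiv ℝ φ y (F y) ∂M = r⁻¹ * ∫ y, fderiv ℝ ψ (r⁻¹ • (y - x)) (F y) ∂M := by
      rw [← integral_const_mul]
      exact integral_congr_ae (Eventually.of_forall fun y => by simp [hφ'])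
    rw [this, abs_mul, abs_of_pos (inv_pos.2 hr), inv_mul_le_iff₀ hr] at hd
    exact hd.trans (by gcongr)
  have herr : |∫ y, fderiv ℝ ψ (r⁻¹ • (y - x)) (F y - F x) ∂M| ≤ L * (μB * (ε / (2 * (L + 1)))) := by
    have hz : ∀ y, y ∉ closedBall x r → fderiv ℝ ψ (r⁻¹ • (y - x)) (F y - F x) = 0 := fun y hy => by
      have : fderiv ℝ ψ (r⁻¹ • (y - x)) = 0 := by
        by_contra hn
        exact hout r hr y hy (support_fderiv_subset ℝ hn)
      simp [this]
    rw [← setIntegral_eq_integral_of_forall_compl_eq_zero hz]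
    calc |∫ y in closedBall x r, fderiv ℝ ψ (r⁻¹ • (y - x)) (F y - F x) ∂M|
        ≤ ∫ y in closedBall x r, L * ‖F y - F x‖ ∂M := by
          rw [← Real.norm_eq_abs]
          refine norm_integral_le_of_norm_le (hsub.norm.integrableOn.const_mul L)
            (Eventually.of_forall fun y => ?_)
          exact ((fderiv ℝ ψ _).le_opNorm _).trans (by gcongr; exact hL _)
      _ = L * (μB * ⨍ y in closedBall x r, ‖F y - F x‖ ∂M) := by rw [integral_const_mul, havg]
      _ ≤ _ := by gcongr
  have hsplit : ∫ y, fderiv ℝ ψ (r⁻¹ • (y - x)) (F x) ∂M =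
      (∫ y, fderiv ℝ ψ (r⁻¹ • (y - x)) (F y) ∂M) -
        ∫ y, fderiv ℝ ψ (r⁻¹ • (y - x)) (F y - F x) ∂M := by
    rw [← integral_sub (hint _ hF) (hint _ hsub)]
    exact integral_congr_ae (Eventually.of_forall fun y => by simp)
  have hLε : L * (ε / (2 * (L + 1))) ≤ ε / 2 := by
    rw [mul_div_assoc', div_le_div_iff₀ (by positivity) (by positivity)]
    nlinarith
  rw [Real.norm_eq_abs, Real.norm_of_nonneg hμB0, hsplit]
  calc _ ≤ r * (A * (μB * (m x + 1))) + L * (μB * (ε / (2 * (L + 1)))) :=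
        (abs_sub _ _).trans (add_le_add hmain herr)
    _ = (r * (A * (m x + 1)) + L * (ε / (2 * (L + 1)))) * μB := by ring
    _ ≤ (ε / 2 + ε / 2) * μB := by gcongr
    _ = ε * μB := by ring

/-- If the blown-up partial derivatives of the components of `X` have negligible integral, then so
has the blown-up divergence, which is at least `N` on `closedBall x (θ * r)` and at least `-1` on
`closedBall x r`; so `M` loses a factor `2 / N` from the larger ball to the smaller one. -/
theorem eventually_decay {d : ℕ} {M : Measure (EuclideanSpace ℝ (Fin d))}
    [IsFiniteMeasure M] {x : EuclideanSpace ℝ (Fin d)}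
    {X : Fin d → EuclideanSpace ℝ (Fin d) → ℝ} (hX : ∀ j, ContDiff ℝ (⊤ : ℕ∞) (X j))
    (hXs : ∀ j, tsupport (X j) ⊆ closedBall 0 1)
    (hX1 : ∀ z, -1 ≤ ∑ j : Fin d, fderiv ℝ (X j) z (EuclideanSpace.single j 1))
    {θ N : ℝ} (hθ : θ ≤ 1)
    (hXN : ∀ z ∈ closedBall (0 : EuclideanSpace ℝ (Fin d)) θ,
        N ≤ ∑ j : Fin d, fderiv ℝ (X j) z (EuclideanSpace.single j 1))
    (ho : ∀ j, (fun r : ℝ => ∫ y, fderiv ℝ (X j) (r⁻¹ • (y - x)) (EuclideanSpace.single j 1) ∂M)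
      =o[𝓝[>] 0] fun r => M.real (closedBall x r)) :
    ∀ᶠ r in 𝓝[>] (0 : ℝ), N * M.real (closedBall x (θ * r)) ≤ 2 * M.real (closedBall x r) := by
  have hsum := Asymptotics.IsLittleO.sum (s := Finset.univ) fun j _ => ho j
  filter_upwards [(Asymptotics.isLittleO_iff.1 hsum) one_pos, self_mem_nhdsWithin] with r h1 hr
  have hr : 0 < r := hr
  rw [one_mul, Real.norm_of_nonneg measureReal_nonneg] at h1
  have h1 := (le_abs_self _).trans h1
  have hint : ∀ j, Integrable
      (fun y => fderiv ℝ (X j) (r⁻¹ • (y - x)) (EuclideanSpace.single j 1)) M := by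
    intro j
    have hc : Continuous (fderiv ℝ (X j)) := (hX j).continuous_fderiv (by simp)
    have hcs : HasCompactSupport (X j) := HasCompactSupport.of_support_subset_isCompact
      (isCompact_closedBall 0 1) ((subset_tsupport _).trans (hXs j))
    obtain ⟨L, hL⟩ : ∃ C, ∀ z, ‖fderiv ℝ (X j) z‖ ≤ C :=
      hc.bounded_above_of_compact_support (hcs.fderiv ℝ)
    refine Integrable.of_bound (C := L * ‖EuclideanSpace.single j (1 : ℝ)‖)
      (Continuous.aestronglyMeasurable (by fun_prop)) (Eventually.of_forall fun y => ?_)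
    exact ((fderiv ℝ (X j) _).le_opNorm _).trans (by gcongr; exact hL _)
  rw [Finset.sum_apply, ← integral_finsetSum _ fun j _ => hint j] at h1
  -- compare the divergence with `N` on the small ball and `-1` on the large one
  have hlow : N * M.real (closedBall x (θ * r)) - M.real (closedBall x r) ≤
      ∫ y, ∑ j : Fin d, fderiv ℝ (X j) (r⁻¹ • (y - x)) (EuclideanSpace.single j 1) ∂M := by
    have hi : ∀ (s : ℝ) (a : ℝ), Integrable ((closedBall x s).indicator fun _ => a) M := fun s a =>
      (integrable_const a).indicator measurableSet_closedBall
    have heq : N * M.real (closedBall x (θ * r)) - M.real (closedBall x r) =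
        ∫ y, ((closedBall x (θ * r)).indicator (fun _ => N) y -
          (closedBall x r).indicator (fun _ => (1 : ℝ)) y) ∂M := by
      rw [integral_sub (hi _ _) (hi _ _), integral_indicator_const _ measurableSet_closedBall,
        integral_indicator_const _ measurableSet_closedBall]
      simp [mul_comm]
    rw [heq]
    refine integral_mono ((hi _ _).sub (hi _ _)) (integrable_finsetSum _ fun j _ => hint j)
      fun y => ?_
    have hn : ‖r⁻¹ • (y - x)‖ = r⁻¹ * dist y x := by
      rw [norm_smul, norm_inv, Real.norm_of_nonneg hr.le, dist_eq_norm]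
    by_cases hy1 : y ∈ closedBall x r
    · by_cases hy : y ∈ closedBall x (θ * r)
      · have : r⁻¹ • (y - x) ∈ closedBall (0 : EuclideanSpace ℝ (Fin d)) θ := by
          rw [mem_closedBall_zero_iff, hn, inv_mul_le_iff₀ hr, mul_comm]
          exact hy
        have := hXN _ this
        simp only [Set.indicator_of_mem hy, Set.indicator_of_mem hy1]
        linarith
      · have := hX1 (r⁻¹ • (y - x))
        simp only [Set.indicator_of_notMem hy, Set.indicator_of_mem hy1]
        linarith
    · have hy : y ∉ closedBall x (θ * r) := fun h =>
        hy1 (closedBall_subset_closedBall (by nlinarith) h)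
      have hz : ∀ j, fderiv ℝ (X j) (r⁻¹ • (y - x)) = 0 := by
        intro j
        by_contra hne
        have := hXs j (support_fderiv_subset ℝ hne)
        rw [mem_closedBall_zero_iff, hn, inv_mul_le_iff₀ hr, mul_one] at this
        exact hy1 this
      simp [Set.indicator_of_notMem hy, Set.indicator_of_notMem hy1, hz]
  linarith

/-- If the fields `F i` have divergences bounded by `m i` with respect to the finite measure `M` on
the open set `U`, then at `M`-a.e. point of `U` where the `F i x` span `ℝ^d` the mass of small balls
is `O(r ^ κ)`, for each `κ < d`. -/
theorem ae_growth {d : ℕ} {M : Measure (EuclideanSpace ℝ (Fin d))}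
    [IsFiniteMeasure M] {U : Set (EuclideanSpace ℝ (Fin d))} (hU : IsOpen U)
    {F : Fin d → EuclideanSpace ℝ (Fin d) → EuclideanSpace ℝ (Fin d)}
    (hF : ∀ i, Integrable (F i) M)
    {m : Fin d → EuclideanSpace ℝ (Fin d) → ℝ} (hm : ∀ i, Integrable (m i) M)
    (hm0 : ∀ i y, 0 ≤ m i y)
    (hdiv : ∀ i, ∀ φ : EuclideanSpace ℝ (Fin d) → ℝ, ContDiff ℝ (⊤ : ℕ∞) φ →
      HasCompactSupport φ → tsupport φ ⊆ U →
      |∫ y, fderiv ℝ φ y (F i y) ∂M| ≤ ∫ y, |φ y| * m i y ∂M)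
    {κ : ℝ} (hκ : 0 < κ) (hκd : κ < d) :
    ∀ᵐ x ∂M, x ∈ U → Submodule.span ℝ (Set.range fun i => F i x) = ⊤ →
      ∃ C r₀ : ℝ, 0 < r₀ ∧ ∀ r, 0 < r → r ≤ r₀ →
        M (closedBall x r) ≤ ENNReal.ofReal (C * r ^ κ) := by
  have hd : 0 < d := by
    have : (0 : ℝ) < d := hκ.trans hκd
    exact_mod_cast this
  have hLF := fun i => (Besicovitch.vitaliFamily M).ae_tendsto_average_norm_sub
    (hF i).locallyIntegrable
  have hLm := fun i => (Besicovitch.vitaliFamily M).ae_tendsto_average (hm i).locallyIntegrable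
  filter_upwards [ae_all_iff.2 hLF, ae_all_iff.2 hLm] with x hxF hxm hx hspan
  obtain ⟨c, hc, hfield⟩ := exists_test_field hd
  -- the contraction factor beats both the constant `2 / c` and the loss of exponent `d - κ`
  obtain ⟨θ, hθ, hθ2, hθc⟩ : ∃ θ : ℝ, 0 < θ ∧ θ < 1 / 2 ∧ 2 * θ ^ ((d : ℝ) - κ) ≤ c := by
    have ht : Tendsto (fun θ : ℝ => 2 * θ ^ ((d : ℝ) - κ)) (𝓝[>] 0)
        (𝓝 (2 * (0 : ℝ) ^ ((d : ℝ) - κ))) :=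
      (((Real.continuous_rpow_const (by linarith)).tendsto 0).mono_left
        nhdsWithin_le_nhds).const_mul 2
    rw [Real.zero_rpow (by linarith), mul_zero] at ht
    obtain ⟨θ, h1, h2⟩ := ((ht.eventually (gt_mem_nhds hc)).and
      (Ioo_mem_nhdsGT (show (0 : ℝ) < 1 / 2 by norm_num))).exists
    exact ⟨θ, h2.1, h2.2, h1.le⟩
  obtain ⟨X, hX, hXs, hX1, hXN⟩ := hfield θ hθ hθ2
  have htend := Besicovitch.tendsto_filterAt M x
  have ho : ∀ j, ∀ v, (fun r : ℝ => ∫ y, fderiv ℝ (X j) (r⁻¹ • (y - x)) v ∂M)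
      =o[𝓝[>] 0] fun r => M.real (closedBall x r) := by
    intro j v
    have hcj : Continuous (fderiv ℝ (X j)) := (hX j).continuous_fderiv (by simp)
    have hcs : HasCompactSupport (X j) := HasCompactSupport.of_support_subset_isCompact
      (isCompact_closedBall 0 1) ((subset_tsupport _).trans (hXs j))
    obtain ⟨L, hL⟩ : ∃ C, ∀ z, ‖fderiv ℝ (X j) z‖ ≤ C :=
      hcj.bounded_above_of_compact_support (hcs.fderiv ℝ)
    have hint : ∀ (r : ℝ) (v : EuclideanSpace ℝ (Fin d)),
        Integrable (fun y => fderiv ℝ (X j) (r⁻¹ • (y - x)) v) M := by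
      intro r v
      refine Integrable.of_bound (C := L * ‖v‖)
        (Continuous.aestronglyMeasurable (by fun_prop)) (Eventually.of_forall fun y => ?_)
      exact ((fderiv ℝ (X j) _).le_opNorm _).trans (by gcongr; exact hL _)
    -- the estimate is linear in `v`, and the `F i x` span
    have hv : v ∈ Submodule.span ℝ (Set.range fun i => F i x) := hspan ▸ Submodule.mem_top
    induction hv using Submodule.span_induction with
    | mem v hv =>
      obtain ⟨i, rfl⟩ := hv
      exact isLittleO_integral_fderiv hU (hF i) (hm i) (hm0 i) (hdiv i) hx
        ((hxF i).comp htend) ((hxm i).comp htend) (hX j) (hXs j)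
    | zero => simp
    | add v w _ _ hv hw =>
      refine (hv.add hw).congr_left fun r => ?_
      rw [← integral_add (hint r v) (hint r w)]
      simp
    | smul a v _ hv =>
      refine (hv.const_mul_left a).congr_left fun r => ?_
      rw [← integral_const_mul]
      simp
  have hev := eventually_decay hX hXs hX1 (by linarith) hXN fun j => ho j _
  obtain ⟨r₀, hr₀, hr⟩ := mem_nhdsGT_iff_exists_Ioc_subset.1 hev
  obtain ⟨C, hC⟩ := growth_of_decay (m := fun r => M.real (closedBall x r)) (κ := κ) (θ := θ)
    (r₀ := r₀) (fun r s hrs => measureReal_mono (closedBall_subset_closedBall hrs))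
    (fun r => measureReal_nonneg) hκ hθ (by linarith) hr₀ fun r h0 h1 => by
      have h2 : c * θ ^ (-(d : ℝ)) * M.real (closedBall x (θ * r)) ≤
        2 * M.real (closedBall x r) := hr ⟨h0, h1⟩
      have h3 : θ ^ κ * (c * θ ^ (-(d : ℝ))) ≥ 2 := by
        have h4 : θ ^ κ * θ ^ (-(d : ℝ)) * θ ^ ((d : ℝ) - κ) = 1 := by
          rw [← Real.rpow_add hθ, ← Real.rpow_add hθ,
            show κ + -(d : ℝ) + (d - κ) = 0 by ring, Real.rpow_zero]
        have h5 : 0 < θ ^ κ * θ ^ (-(d : ℝ)) := by positivity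
        nlinarith
      have h6 : 2 * M.real (closedBall x (θ * r)) ≤ 2 * (θ ^ κ * M.real (closedBall x r)) :=
        calc 2 * M.real (closedBall x (θ * r))
            ≤ θ ^ κ * (c * θ ^ (-(d : ℝ))) * M.real (closedBall x (θ * r)) := by
              gcongr
          _ = θ ^ κ * (c * θ ^ (-(d : ℝ)) * M.real (closedBall x (θ * r))) := by ring
          _ ≤ θ ^ κ * (2 * M.real (closedBall x r)) := by gcongr
          _ = _ := by ring
      exact le_of_mul_le_mul_left h6 two_pos
  refine ⟨C, r₀, hr₀, fun r h0 h1 => ?_⟩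
  rw [← ofReal_measureReal (measure_ne_top M _)]
  exact ENNReal.ofReal_le_ofReal (hC r h0 h1)

/-! ### Local form of the divergence hypothesis -/

theorem integrable_fderiv_apply {d : ℕ} {Ω : Set (EuclideanSpace ℝ (Fin d))}
    {ν : Measure (EuclideanSpace ℝ (Fin d))}
    (hν : ∀ K : Set (EuclideanSpace ℝ (Fin d)), K ⊆ Ω → IsCompact K → ν K < ⊤)
    {G : EuclideanSpace ℝ (Fin d) → EuclideanSpace ℝ (Fin d)}
    (hGm : AEStronglyMeasurable G ν) (hG : ∀ᵐ x ∂ν, ‖G x‖ ≤ 1)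
    {φ : EuclideanSpace ℝ (Fin d) → ℝ} (hφ : ContDiff ℝ (⊤ : ℕ∞) φ)
    (hφc : HasCompactSupport φ) (hφΩ : tsupport φ ⊆ Ω) :
    Integrable (fun x => fderiv ℝ φ x (G x)) ν := by
  have hcj : Continuous (fderiv ℝ φ) := hφ.continuous_fderiv (by simp)
  obtain ⟨L, hL⟩ : ∃ C, ∀ z, ‖fderiv ℝ φ z‖ ≤ C :=
    hcj.bounded_above_of_compact_support (hφc.fderiv ℝ)
  have hs : Function.support (fun x => fderiv ℝ φ x (G x)) ⊆ tsupport φ := fun x hx =>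
    support_fderiv_subset ℝ fun h0 => hx (by simp [h0])
  rw [← integrableOn_iff_integrable_of_support_subset hs]
  refine IntegrableOn.of_bound (C := L * 1) (hν _ hφΩ hφc) ?_ (ae_restrict_of_ae ?_)
  · exact (hcj.aestronglyMeasurable.prodMk hGm.restrict |>
        isBoundedBilinearMap_apply.continuous.comp_aestronglyMeasurable)
  · filter_upwards [hG] with x hx
    exact ((fderiv ℝ φ _).le_opNorm _).trans
      (mul_le_mul (hL _) hx (norm_nonneg _) ((norm_nonneg _).trans (hL 0)))

/-- Near each point of `Ω`, the divergence of the current `G • ν` is bounded by a finite measure.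
When `h` is integrable near `x₀` this measure is `|h| ρ`. Otherwise `φ * h` is not integrable for
any `φ` with `φ x₀ > 0`, so the right-hand side of `hdiv` is the junk value `0` for such `φ`; as
every test function is a difference of two of these, the divergence then vanishes near `x₀`, and
the measure is `0`. -/
theorem exists_local_bound {d : ℕ} {Ω : Set (EuclideanSpace ℝ (Fin d))} (hΩ : IsOpen Ω)
    {ν : Measure (EuclideanSpace ℝ (Fin d))}
    (hν : ∀ K : Set (EuclideanSpace ℝ (Fin d)), K ⊆ Ω → IsCompact K → ν K < ⊤)
    {G : EuclideanSpace ℝ (Fin d) → EuclideanSpace ℝ (Fin d)}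
    (hGm : AEStronglyMeasurable G ν) (hG : ∀ᵐ x ∂ν, ‖G x‖ ≤ 1)
    {ρ : Measure (EuclideanSpace ℝ (Fin d))}
    {h : EuclideanSpace ℝ (Fin d) → ℝ} (hh : AEStronglyMeasurable h ρ)
    (hdiv : ∀ φ : EuclideanSpace ℝ (Fin d) → ℝ,
      ContDiff ℝ (⊤ : ℕ∞) φ → HasCompactSupport φ → tsupport φ ⊆ Ω →
      (-∑ j : Fin d, ∫ x, fderiv ℝ φ x (EuclideanSpace.single j 1) * G x j ∂ν)
        = ∫ x, φ x * h x ∂ρ)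
    {x₀ : EuclideanSpace ℝ (Fin d)} (hx₀ : x₀ ∈ Ω) :
    ∃ R > 0, ∃ μ : Measure (EuclideanSpace ℝ (Fin d)), IsFiniteMeasure μ ∧
      ∀ φ : EuclideanSpace ℝ (Fin d) → ℝ,
        ContDiff ℝ (⊤ : ℕ∞) φ → HasCompactSupport φ → tsupport φ ⊆ ball x₀ R →
        |∫ x, fderiv ℝ φ x (G x) ∂ν| ≤ ∫ x, |φ x| ∂μ := by
  have hT : ∀ φ : EuclideanSpace ℝ (Fin d) → ℝ,
      ContDiff ℝ (⊤ : ℕ∞) φ → HasCompactSupport φ → tsupport φ ⊆ Ω →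
      ∫ x, fderiv ℝ φ x (G x) ∂ν = -∫ x, φ x * h x ∂ρ := by
    intro φ h1 h2 h3
    rw [← hdiv φ h1 h2 h3, neg_neg, ← integral_finsetSum]
    · simp_rw [sum_coord_fderiv]
    · intro j _
      have h4 := integrable_fderiv_apply hν (G := fun x => G x j • EuclideanSpace.single j (1 : ℝ))
        (((EuclideanSpace.proj j : EuclideanSpace ℝ (Fin d) →L[ℝ] ℝ).continuous
          |>.comp_aestronglyMeasurable hGm).smul_const _) ?_ h1 h2 h3
      · simpa [mul_comm] using h4
      · filter_upwards [hG] with x hx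
        rw [norm_smul]
        simpa using (PiLp.norm_apply_le (G x) j).trans hx
  obtain ⟨R₀, hR₀, hRΩ⟩ := Metric.isOpen_iff.1 hΩ x₀ hx₀
  by_cases hcase : ∃ R > 0, IntegrableOn h (ball x₀ R) ρ
  · obtain ⟨R, hR, hint⟩ := hcase
    have hint' : IntegrableOn h (ball x₀ (min R R₀)) ρ :=
      hint.mono_set (ball_subset_ball (min_le_left _ _))
    refine ⟨min R R₀, lt_min hR hR₀,
      (ρ.restrict (ball x₀ (min R R₀))).withDensity fun x => ‖h x‖ₑ,
      isFiniteMeasure_withDensity hint'.2.ne, fun φ h1 h2 h3 => ?_⟩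
    have hz : ∀ y, y ∉ ball x₀ (min R R₀) → φ y * h y = 0 := fun y hy => by
      have : φ y = 0 := by by_contra hn; exact hy (h3 (subset_tsupport _ hn))
      simp [this]
    rw [hT φ h1 h2 (h3.trans ((ball_subset_ball (min_le_right _ _)).trans hRΩ)), abs_neg,
      ← setIntegral_eq_integral_of_forall_compl_eq_zero hz,
      integral_withDensity_eq_integral_toReal_smul₀ hh.restrict.enorm
        (Eventually.of_forall fun x => enorm_lt_top)]
    refine (abs_integral_le_integral_abs).trans (le_of_eq ?_)
    refine integral_congr_ae (Eventually.of_forall fun y => ?_)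
    simp [abs_mul, mul_comm]
  · -- if `h` is not integrable near `x₀`, the junk value of the integral forces `div T = 0`
    push Not at hcase
    have hzero : ∀ g : EuclideanSpace ℝ (Fin d) → ℝ,
        ContDiff ℝ (⊤ : ℕ∞) g → HasCompactSupport g → tsupport g ⊆ Ω → 0 < g x₀ →
        ∫ x, fderiv ℝ g x (G x) ∂ν = 0 := by
      intro g h1 h2 h3 h4
      rw [hT g h1 h2 h3, neg_eq_zero]
      refine integral_undef fun hI => ?_
      have hnear : ∀ᶠ x in 𝓝 x₀, g x₀ / 2 < g x :=
        h1.continuous.continuousAt.eventually (lt_mem_nhds (by linarith))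
      obtain ⟨R, hR, hRg⟩ := Metric.eventually_nhds_iff_ball.1 hnear
      refine hcase R hR ?_
      refine Integrable.mono' (hI.integrableOn.norm.const_mul (2 / g x₀)) hh.restrict
        ((ae_restrict_mem measurableSet_ball).mono fun x hx => ?_)
      have h5 := hRg x hx
      have h6 : 0 < g x := by linarith
      rw [norm_mul, Real.norm_of_nonneg h6.le, ← mul_assoc]
      refine le_mul_of_one_le_left (norm_nonneg _) ?_
      rw [div_mul_eq_mul_div, le_div_iff₀ h4]
      linarith
    refine ⟨R₀, hR₀, 0, inferInstance, fun φ h1 h2 h3 => ?_⟩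
    let b : ContDiffBump x₀ := ⟨R₀ / 3, R₀ / 2, by positivity, by linarith⟩
    have hb1 : ContDiff ℝ (⊤ : ℕ∞) b := b.contDiff
    have hbs : tsupport b ⊆ Ω := by
      rw [b.tsupport_eq]
      exact (closedBall_subset_ball (by simp only [b]; linarith)).trans hRΩ
    -- write `φ = (φ + t * b) - t * b` with both functions on the right positive at `x₀`
    have hb0 : b x₀ = 1 := b.one_of_mem_closedBall (mem_closedBall_self (by positivity))
    set t : ℝ := |φ x₀| + 1 with ht
    have hb := hzero b hb1 b.hasCompactSupport hbs (by rw [hb0]; exact one_pos)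
    have hs1 : ContDiff ℝ (⊤ : ℕ∞) (fun x => φ x + t * b x) := h1.add (contDiff_const.mul hb1)
    have hsub : Function.support (fun x => φ x + t * b x) ⊆ tsupport φ ∪ tsupport b := by
      intro x hx
      by_contra hn
      rw [Set.mem_union, not_or] at hn
      exact hx (by simp [image_eq_zero_of_notMem_tsupport hn.1,
        image_eq_zero_of_notMem_tsupport hn.2])
    have hst : tsupport (fun x => φ x + t * b x) ⊆ tsupport φ ∪ tsupport b :=
      closure_minimal hsub ((isClosed_tsupport _).union (isClosed_tsupport _))
    have hs := hzero (fun x => φ x + t * b x) hs1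
      (HasCompactSupport.of_support_subset_isCompact (h2.union b.hasCompactSupport) hsub)
      (hst.trans (Set.union_subset (h3.trans hRΩ) hbs)) (by
        rw [hb0]; linarith [neg_abs_le (φ x₀)])
    have hsplit : ∫ x, fderiv ℝ (fun x => φ x + t * b x) x (G x) ∂ν =
        ∫ x, fderiv ℝ φ x (G x) ∂ν + t * ∫ x, fderiv ℝ b x (G x) ∂ν := by
      rw [← integral_const_mul, ← integral_add
        (integrable_fderiv_apply hν hGm hG h1 h2 (h3.trans hRΩ))
        ((integrable_fderiv_apply hν hGm hG hb1 b.hasCompactSupport hbs).const_mul t)]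
      refine integral_congr_ae (Eventually.of_forall fun x => ?_)
      have e : fderiv ℝ (fun x => φ x + t * b x) x = _ :=
        (((h1.differentiable (by simp)) x).hasFDerivAt.add
        (((hb1.differentiable (by simp)) x).hasFDerivAt.const_mul t)).fderiv
      simp [e]
    rw [hs, hb] at hsplit
    have : ∫ x, fderiv ℝ φ x (G x) ∂ν = 0 := by linarith
    simp [this]

/-! ### The theorem -/

/-- **Soft structure theorem for families of one-dimensional normal currents.** Let
`T₁ = T⃗₁‖T₁‖, …, T_d = T⃗_d‖T_d‖` be `ℝ^d`-valued Radon measures on the open set `Ω ⊆ ℝ^d`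
(polar decompositions: `‖Tᵢ‖ = ν i`, `T⃗ᵢ = G i` of unit norm `ν i`-a.e.), each of whose
divergences is representable by a signed Radon measure `hᵢ ρᵢ` (so each `Tᵢ` is a one-dimensional
normal current).  If `σ` is a positive Radon measure on `Ω` with (i) `σ ≪ ‖Tᵢ‖` for all `i`, and
(ii) `span{T⃗₁(x), …, T⃗_d(x)} = ℝ^d` for `σ`-a.e. `x`, then `σ ≪ ℋ^κ` for all `0 ≤ κ < d`. -/
theorem soft_structure_theorem_for_normal_one_currents
    {d : ℕ} (Ω : Set (EuclideanSpace ℝ (Fin d))) (hΩ : IsOpen Ω)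
    -- the currents `Tᵢ = G i • (ν i)`:
    (ν : Fin d → Measure (EuclideanSpace ℝ (Fin d)))
    (hνloc : ∀ i, ∀ K : Set (EuclideanSpace ℝ (Fin d)), K ⊆ Ω → IsCompact K → ν i K < ⊤)
    (hνsupp : ∀ i, ν i Ωᶜ = 0)
    (G : Fin d → EuclideanSpace ℝ (Fin d) → EuclideanSpace ℝ (Fin d))
    (hGm : ∀ i, AEStronglyMeasurable (G i) (ν i)) (hGnorm : ∀ i, ∀ᵐ x ∂(ν i), ‖G i x‖ = 1)
    -- each `div Tᵢ` is representable by a signed Radon measure `hᵢ ρᵢ`: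
    (ρ : Fin d → Measure (EuclideanSpace ℝ (Fin d)))
    (hρloc : ∀ i, ∀ K : Set (EuclideanSpace ℝ (Fin d)), K ⊆ Ω → IsCompact K → ρ i K < ⊤)
    (h : Fin d → EuclideanSpace ℝ (Fin d) → ℝ) (hhm : ∀ i, AEStronglyMeasurable (h i) (ρ i))
    (hdiv : ∀ i, ∀ φ : EuclideanSpace ℝ (Fin d) → ℝ,
      ContDiff ℝ (⊤ : ℕ∞) φ → HasCompactSupport φ → tsupport φ ⊆ Ω →
      (-∑ j : Fin d, ∫ x, fderiv ℝ φ x (EuclideanSpace.single j 1) * G i x j ∂(ν i))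
        = ∫ x, φ x * h i x ∂(ρ i))
    -- `σ` is a positive Radon measure on `Ω`:
    (σ : Measure (EuclideanSpace ℝ (Fin d)))
    (hσloc : ∀ K : Set (EuclideanSpace ℝ (Fin d)), K ⊆ Ω → IsCompact K → σ K < ⊤)
    (hσsupp : σ Ωᶜ = 0)
    -- (i) `σ ≪ ‖Tᵢ‖` for all `i`:
    (habs : ∀ i, σ ≪ ν i)
    -- (ii) the polars span `ℝ^d` at `σ`-a.e. point:
    (hspan : ∀ᵐ x ∂σ, Submodule.span ℝ (Set.range fun i => G i x) = ⊤) :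
    ∀ κ : ℝ, 0 ≤ κ → κ < (d : ℝ) → σ ≪ μH[κ] := by
  intro κ₀ hκ₀ hκ₀d
  -- raising the exponent to some `κ ∈ (κ₀, d)` makes it positive, and only helps
  obtain ⟨κ, hκ₀κ, hκd⟩ := exists_between hκ₀d
  have hκ : 0 < κ := hκ₀.trans_lt hκ₀κ
  intro E hE₀
  have hE : μH[κ] E = 0 :=
    le_antisymm ((Measure.hausdorffMeasure_mono hκ₀κ.le E).trans hE₀.le) zero_le
  suffices hEΩ : σ (E ∩ Ω) = 0 by
    refine measure_mono_null (t := (E ∩ Ω) ∪ Ωᶜ) (fun x hx => ?_)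
      (measure_union_null hEΩ hσsupp)
    by_cases hxΩ : x ∈ Ω
    · exact Or.inl ⟨hx, hxΩ⟩
    · exact Or.inr hxΩ
  refine measure_null_of_locally_null _ fun x₀ hx₀ => ?_
  have hx₀Ω : x₀ ∈ Ω := hx₀.2
  have hG1 : ∀ i, ∀ᵐ x ∂(ν i), ‖G i x‖ ≤ 1 := fun i => (hGnorm i).mono fun x hx => hx.le
  choose R hR μ hμfin hμ using fun i =>
    exists_local_bound hΩ (hνloc i) (hGm i) (hG1 i) (hhm i) (hdiv i) hx₀Ω
  -- a common radius
  obtain ⟨r, hr, hrR, hrΩ⟩ : ∃ r > 0, (∀ i, r ≤ R i) ∧ closedBall x₀ r ⊆ Ω := by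
    obtain ⟨δ, hδ, hδΩ⟩ := Metric.isOpen_iff.1 hΩ x₀ hx₀Ω
    have h1 : ∀ᶠ r in 𝓝[>] (0 : ℝ), ∀ i, r ≤ R i := eventually_all.2 fun i =>
      mem_of_superset (Ioo_mem_nhdsGT (hR i)) fun r hr => hr.2.le
    obtain ⟨r, h2, h3⟩ := (h1.and (Ioo_mem_nhdsGT hδ)).exists
    exact ⟨r, h3.1, h2, (closedBall_subset_ball h3.2).trans hδΩ⟩
  set U : Set (EuclideanSpace ℝ (Fin d)) := ball x₀ r with hU
  have hUo : IsOpen U := isOpen_ball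
  have hUΩ : U ⊆ Ω := ball_subset_closedBall.trans hrΩ
  have hνfin : ∀ i, IsFiniteMeasure ((ν i).restrict U) := fun i =>
    ⟨by
      rw [Measure.restrict_apply_univ]
      exact (measure_mono ball_subset_closedBall).trans_lt
        (hνloc i _ hrΩ (isCompact_closedBall x₀ r))⟩
  -- a finite measure dominating all `‖Tᵢ‖` and all bounds on `div Tᵢ` near `x₀`
  set M : Measure (EuclideanSpace ℝ (Fin d)) := ∑ i, ((ν i).restrict U + μ i) with hM
  have hMfin : IsFiniteMeasure M := by rw [hM]; infer_instance
  have hνdec : ∀ i, ((ν i).restrict U).HaveLebesgueDecomposition M := fun i =>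
    have := hνfin i
    Measure.haveLebesgueDecomposition_of_sigmaFinite _ M
  have hμdec : ∀ i, (μ i).HaveLebesgueDecomposition M := fun i =>
    have := hμfin i
    Measure.haveLebesgueDecomposition_of_sigmaFinite _ M
  have hMsum : M = Measure.sum fun i => (ν i).restrict U + μ i := (Measure.sum_fintype _).symm
  have hνM : ∀ i, (ν i).restrict U ≪ M := fun i => by
    rw [hMsum]
    exact Measure.absolutelyContinuous_sum_right i
      (Measure.absolutelyContinuous_of_le (Measure.le_add_right le_rfl))
  have hμM : ∀ i, μ i ≪ M := fun i => by
    rw [hMsum]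
    exact Measure.absolutelyContinuous_sum_right i
      (Measure.absolutelyContinuous_of_le (Measure.le_add_left le_rfl))
  set n : Fin d → EuclideanSpace ℝ (Fin d) → ℝ :=
    fun i x => (((ν i).restrict U).rnDeriv M x).toReal with hn
  set m : Fin d → EuclideanSpace ℝ (Fin d) → ℝ := fun i x => ((μ i).rnDeriv M x).toReal with hm
  have hGint : ∀ i, Integrable (G i) ((ν i).restrict U) := fun i =>
    Integrable.of_bound (hGm i).restrict 1 (ae_restrict_of_ae (hG1 i))
  have hgrowth := ae_growth (M := M) hUo (F := fun i x => n i x • G i x) (m := m)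
    (fun i => (integrable_rnDeriv_smul_iff (hνM i)).2 (hGint i))
    (fun i => Measure.integrable_toReal_rnDeriv) (fun i y => ENNReal.toReal_nonneg)
    (fun i φ h1 h2 h3 => by
      have h4 := hμ i φ h1 h2 (h3.trans (ball_subset_ball (hrR i)))
      have h5 : ∀ y, y ∉ U → fderiv ℝ φ y (G i y) = 0 := fun y hy => by
        have : fderiv ℝ φ y = 0 := by
          by_contra hne
          exact hy (h3 (support_fderiv_subset ℝ hne))
        simp [this]
      rw [← setIntegral_eq_integral_of_forall_compl_eq_zero h5,
        ← integral_rnDeriv_smul (hνM i), ← integral_rnDeriv_smul (hμM i)] at h4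
      simpa [n, m, mul_comm] using h4) hκ hκd
  have hd : 0 < d := by
    have : (0 : ℝ) < d := hκ.trans hκd
    exact_mod_cast this
  have hσν : ∀ i, σ.restrict U ≪ (ν i).restrict U := fun i => (habs i).restrict U
  have hσM : σ.restrict U ≪ M := (hσν ⟨0, hd⟩).trans (hνM _)
  -- at `σ`-a.e. point the densities are positive, so the fields `n i • G i` still span
  have hgood : ∀ᵐ x ∂(σ.restrict U), ∃ C r₀ : ℝ, 0 < r₀ ∧ ∀ r, 0 < r → r ≤ r₀ →
      M (closedBall x r) ≤ ENNReal.ofReal (C * r ^ κ) := by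
    have hpos : ∀ i, ∀ᵐ x ∂(σ.restrict U), 0 < n i x := fun i => by
      filter_upwards [(hσν i).ae_le (Measure.rnDeriv_pos (hνM i)),
        hσM.ae_le (Measure.rnDeriv_lt_top ((ν i).restrict U) M)] with x h1 h2
      exact ENNReal.toReal_pos h1.ne' h2.ne
    filter_upwards [hσM.ae_le hgrowth, ae_all_iff.2 hpos, ae_restrict_of_ae hspan,
      ae_restrict_mem hUo.measurableSet] with x h1 h2 h3 h4
    refine h1 h4 (top_unique ?_)
    rw [← h3, Submodule.span_le]
    rintro _ ⟨i, rfl⟩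
    have h5 : G i x = (n i x)⁻¹ • (n i x • G i x) := by
      rw [smul_smul, inv_mul_cancel₀ (h2 i).ne', one_smul]
    rw [SetLike.mem_coe]
    simp only
    rw [h5]
    exact Submodule.smul_mem _ _ (Submodule.subset_span ⟨i, rfl⟩)
  refine ⟨E ∩ Ω ∩ U, inter_mem_nhdsWithin _ (hUo.mem_nhds (mem_ball_self hr)), ?_⟩
  have hnull := hσM (null_of_growth M hκ _ E (fun x hx => hx) hE)
  have hres : σ.restrict U E = 0 := by
    refine measure_mono_null (fun x hx => ?_) (measure_union_null hnull (ae_iff.1 hgood))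
    by_cases hxg : ∃ C r₀ : ℝ, 0 < r₀ ∧ ∀ r, 0 < r → r ≤ r₀ →
      M (closedBall x r) ≤ ENNReal.ofReal (C * r ^ κ)
    · exact Or.inl ⟨hxg, hx⟩
    · exact Or.inr hxg
  rw [Measure.restrict_apply' hUo.measurableSet] at hres
  exact measure_mono_null (Set.inter_subset_inter_left U Set.inter_subset_left) hres
end

section
/- (Invariance criterion.) Let Ω ⊆ ℝ^d be open, 0 ≤ ℓ ≤ d an integer, and σ a positive Radon measure on Ω with Lebesgue decomposition σ = σ^{ac} L^d + σ^s. Assume that for σ^s-almost every x ∈ Ω, every probability tangent measure τ ∈ Tan(σ^s, x) can be written on the open unit ball B_1 as a finite sum τ = (τ_1 + ⋯ + τ_k)⌊B_1, where each τ_h is a positive measure that is V_h-invariant on B_1 for some linear subspace V_h ⊆ ℝ^d with dim V_h ≥ ℓ. Then σ ≪ H^κ for every 0 ≤ κ < ℓ; in particular dim_H(σ) ≥ ℓ. -/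
open MeasureTheory Metric Filter
open scoped ENNReal RealInnerProductSpace Topology

/-- The normalized blow-up `γ = ν(B_r(x))⁻¹ · ((T^{r,x})_# ν) ⌞ B₁` of a positive measure `ν` at
`x` at scale `r`, where `T^{r,x}(y) = (y − x)/r`. -/
noncomputable def blowUp {d : ℕ} (ν : Measure (EuclideanSpace ℝ (Fin d)))
    (x : EuclideanSpace ℝ (Fin d)) (r : ℝ) : Measure (EuclideanSpace ℝ (Fin d)) :=
  (ν (ball x r))⁻¹ • (Measure.map (fun y => r⁻¹ • (y - x)) ν).restrict (ball 0 1)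

/-- `τ` is a probability tangent measure of the positive measure `ν` at `x`: a weak-* limit, in
the space of measures on the closed unit ball, of a sequence of normalized blow-ups of `ν` at `x`
at scales `rⱼ ↓ 0`. -/
def IsProbTangent {d : ℕ} (ν : Measure (EuclideanSpace ℝ (Fin d)))
    (x : EuclideanSpace ℝ (Fin d)) (τ : Measure (EuclideanSpace ℝ (Fin d))) : Prop :=
  τ (closedBall (0 : EuclideanSpace ℝ (Fin d)) 1)ᶜ = 0 ∧
  ∃ r : ℕ → ℝ, (∀ j, 0 < r j) ∧ Tendsto r atTop (𝓝 0) ∧ (∀ j, ν (ball x (r j)) ≠ 0) ∧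
    ∀ f : EuclideanSpace ℝ (Fin d) → ℝ, Continuous f →
      Tendsto (fun j => ∫ y, f y ∂(blowUp ν x (r j))) atTop (𝓝 (∫ y, f y ∂τ))

/-- A positive measure `τ` is `V`-invariant on the open set `U` if its distributional directional
derivative along every `v ∈ V` vanishes on `U`. -/
def VInvariantOn {d : ℕ} (τ : Measure (EuclideanSpace ℝ (Fin d)))
    (V : Submodule ℝ (EuclideanSpace ℝ (Fin d))) (U : Set (EuclideanSpace ℝ (Fin d))) : Prop :=
  ∀ v ∈ V, ∀ φ : EuclideanSpace ℝ (Fin d) → ℝ,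
    ContDiff ℝ (⊤ : ℕ∞) φ → HasCompactSupport φ → tsupport φ ⊆ U →
    ∫ y, fderiv ℝ φ y v ∂τ = 0

/-!
The proof is a blow-up and compactness argument.

A finite measure `τ` that is `V`-invariant on the unit ball gives the same integral to a test
function and to its translates by small vectors of `V` (`integral_translate`). If `dim V ≥ ℓ`, a
grid of `m ^ ℓ` points in `V` with spacing `5 δ`, where `δ = 1 / (10 m ℓ)`, has disjoint balls of
radius `2 δ` inside the unit ball, each of mass at least that of the closed ball of radius `δ`
about `0`. So the latter carries at most `m ^ (-ℓ)` of the total mass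
(`pow_mul_closedBall_le`). As `κ < ℓ`, for large `m` this fraction is strictly below `δ ^ κ`
(`exists_scale`). The estimate is linear in `τ`, with constants depending only on `m` and `ℓ`, so
it passes to finite sums of invariant measures with different subspaces, whatever their number
(`tangent_closedBall_le`).

Let `x ∈ Ω` be a point at which the tangent measures split. If
`σˢ(B_{δ r}(x)) > δ ^ κ σˢ(B_r(x))` for arbitrarily small `r`, Prokhorov's theorem gives a tangent
probability measure with mass at least `δ ^ κ` on the closed `δ`-ball (`exists_tangent`), which
contradicts the previous bound. Hence the reverse inequality holds for all small `r`, and iterating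
it gives `σˢ(B_r(x)) ≤ C r ^ κ` for small `r` (`growth_of_decay`). A measure with this growth at
almost every point is absolutely continuous with respect to `μH[κ]` (`absolutelyContinuous_of_growth`).
The part of `σ` with a Lebesgue density is handled by `μH[d]` being a Haar measure.
-/

/-! ### Growth of balls and Hausdorff measure -/

/-- If almost every point has finite upper `κ`-density, the measure is absolutely continuous with
respect to `μH[κ]`. The points are sorted into sets `E n` on which the growth bound is uniform;
there the mass of any set of small diameter is controlled by a ball about one of its points. -/
theorem absolutelyContinuous_of_growth {X : Type*} [MetricSpace X] [MeasurableSpace X] [BorelSpace X]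
    (ν : Measure X) {κ : ℝ}
    (h : ∀ᵐ x ∂ν, ∃ C : ℝ≥0∞, C ≠ ⊤ ∧ ∃ ρ > (0 : ℝ), ∀ r, 0 < r → r < ρ →
      ν (ball x r) ≤ C * ENNReal.ofReal r ^ κ) :
    ν ≪ μH[κ] := by
  set E : ℕ → Set X := fun n => {x | ∀ r, 0 < r → r < 1 / ((n : ℝ) + 1) →
    ν (ball x r) ≤ ((n : ℝ≥0∞) + 1) * ENNReal.ofReal r ^ κ} with hE
  have key : ∀ n : ℕ, ((n : ℝ≥0∞) + 1)⁻¹ • ν.restrict (E n) ≤ μH[κ] := by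
    intro n
    have hn0 : ((n : ℝ≥0∞) + 1) ≠ 0 := by simp
    have hnt : ((n : ℝ≥0∞) + 1) ≠ ⊤ := by simp
    have hpos : (0 : ℝ) < 1 / ((n : ℝ) + 1) := by positivity
    refine Measure.le_hausdorffMeasure κ _ (ENNReal.ofReal (1 / (2 * ((n : ℝ) + 1))))
      (by simp; positivity) fun s hs => ?_
    have hfin : ediam s ≠ ⊤ := ne_top_of_le_ne_top ENNReal.ofReal_ne_top hs
    have hlt : (ediam s).toReal < 1 / ((n : ℝ) + 1) := by
      have := ENNReal.toReal_le_of_le_ofReal (by positivity) hs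
      refine this.trans_lt ?_
      rw [one_div_lt_one_div (by positivity) (by positivity)]
      have : (0 : ℝ) < (n : ℝ) + 1 := by positivity
      linarith
    rw [Measure.smul_apply, smul_eq_mul, ENNReal.inv_mul_le_iff hn0 hnt]
    have h1 : ν.restrict (E n) s ≤ ν (closure s ∩ E n) := by
      calc ν.restrict (E n) s ≤ ν.restrict (E n) (closure s) := measure_mono subset_closure
        _ = _ := Measure.restrict_apply isClosed_closure.measurableSet
    refine h1.trans ?_
    rcases (closure s ∩ E n).eq_empty_or_nonempty with h0 | ⟨x, hxs, hxE⟩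
    · simp [h0]
    -- `closure s` lies in every ball about `x` of radius larger than the diameter of `s`
    have h2 : ∀ r, (ediam s).toReal < r → r < 1 / ((n : ℝ) + 1) →
        ν (closure s ∩ E n) ≤ ((n : ℝ≥0∞) + 1) * ENNReal.ofReal r ^ κ := by
      intro r hr hr'
      refine le_trans (measure_mono ?_) (hxE r (ENNReal.toReal_nonneg.trans_lt hr) hr')
      rintro y ⟨hy, -⟩
      have : edist y x ≤ ediam s := by
        rw [← ediam_closure]; exact edist_le_ediam_of_mem hy hxs
      rw [mem_ball, dist_edist]
      exact (ENNReal.toReal_mono hfin this).trans_lt hr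
    have hcont : Tendsto (fun r : ℝ => ((n : ℝ≥0∞) + 1) * ENNReal.ofReal r ^ κ)
        (𝓝[>] (ediam s).toReal) (𝓝 (((n : ℝ≥0∞) + 1) * ediam s ^ κ)) := by
      have : Tendsto (fun r : ℝ => ENNReal.ofReal r ^ κ)
          (𝓝[>] (ediam s).toReal) (𝓝 (ediam s ^ κ)) := by
        have h3 := ((ENNReal.continuous_rpow_const (y := κ)).comp
          ENNReal.continuous_ofReal).tendsto (ediam s).toReal
        simp only [Function.comp_def, ENNReal.ofReal_toReal hfin] at h3
        exact h3.mono_left nhdsWithin_le_nhds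
      exact ENNReal.Tendsto.const_mul this (Or.inr hnt)
    refine ge_of_tendsto hcont ?_
    filter_upwards [Ioo_mem_nhdsGT hlt] with r hr
    exact h2 r hr.1 hr.2
  intro A hA
  have hAn : ∀ n, ν (A ∩ E n) = 0 := by
    intro n
    have h1 : (((n : ℝ≥0∞) + 1)⁻¹ • ν.restrict (E n)) A ≤ 0 := by
      rw [← hA]; exact key n A
    rw [Measure.smul_apply, smul_eq_mul, nonpos_iff_eq_zero, mul_eq_zero] at h1
    rcases h1 with h1 | h1
    · simp at h1
    · exact nonpos_iff_eq_zero.1 ((Measure.le_restrict_apply _ _).trans h1.le)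
  refine measure_mono_null (t := {x | x ∉ ⋃ n, E n} ∪ ⋃ n, A ∩ E n) ?_ ?_
  · intro x hx
    by_cases hxE : x ∈ ⋃ n, E n
    · obtain ⟨n, hn⟩ := Set.mem_iUnion.1 hxE
      exact Or.inr (Set.mem_iUnion.2 ⟨n, hx, hn⟩)
    · exact Or.inl hxE
  · refine measure_union_null ?_ (measure_iUnion_null hAn)
    change ∀ᵐ x ∂ν, x ∈ ⋃ n, E n
    filter_upwards [h] with x hx
    obtain ⟨C, hC, ρ, hρ, hb⟩ := hx
    obtain ⟨n₁, hn₁⟩ := exists_nat_one_div_lt hρ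
    obtain ⟨n₂, hn₂⟩ := ENNReal.exists_nat_gt hC
    refine Set.mem_iUnion.2 ⟨max n₁ n₂, fun r hr hr' => ?_⟩
    have hle : 1 / (((max n₁ n₂ : ℕ) : ℝ) + 1) ≤ 1 / ((n₁ : ℝ) + 1) := by
      apply one_div_le_one_div_of_le (by positivity)
      gcongr; exact le_max_left _ _
    refine (hb r hr (hr'.trans_le (hle.trans hn₁.le))).trans ?_
    gcongr
    refine hn₂.le.trans (le_trans ?_ le_self_add)
    exact_mod_cast le_max_right _ _

theorem volume_absolutelyContinuous_hausdorffMeasure {d : ℕ} {κ : ℝ} (h : κ < d) :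
    (volume : Measure (EuclideanSpace ℝ (Fin d))) ≪ μH[κ] := by
  have h1 : (volume : Measure (EuclideanSpace ℝ (Fin d))) ≪ μH[(d : ℝ)] := by
    have : Measure.IsAddHaarMeasure (μH[(d : ℝ)] : Measure (EuclideanSpace ℝ (Fin d))) := by
      simpa using MeasureTheory.isAddHaarMeasure_hausdorffMeasure (E := EuclideanSpace ℝ (Fin d))
    exact Measure.absolutelyContinuous_isAddHaarMeasure _ _
  refine h1.trans fun s hs => ?_
  rcases Measure.hausdorffMeasure_zero_or_top h s with h0 | h0
  · exact h0
  · simp [hs] at h0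

/-- Iterating a decay inequality between the scales `r` and `δ r` gives power growth of order `κ`
at all small scales. -/
theorem growth_of_decay_s10 {X : Type*} [MetricSpace X] [MeasurableSpace X]
    (ν : Measure X) {κ δ r₀ : ℝ} (hκ : 0 ≤ κ) (hδ : 0 < δ) (hδ1 : δ < 1) (hr₀ : 0 < r₀) (x : X)
    (hfin : ν (ball x r₀) ≠ ⊤)
    (h : ∀ r, 0 < r → r ≤ r₀ → ν (ball x (δ * r)) ≤ ENNReal.ofReal δ ^ κ * ν (ball x r)) :
    ∃ C : ℝ≥0∞, C ≠ ⊤ ∧ ∃ ρ > (0 : ℝ), ∀ r, 0 < r → r < ρ →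
      ν (ball x r) ≤ C * ENNReal.ofReal r ^ κ := by
  have hiter : ∀ n : ℕ, ν (ball x (δ ^ n * r₀)) ≤ ENNReal.ofReal (δ ^ n) ^ κ * ν (ball x r₀) := by
    intro n
    induction n with
    | zero => simp
    | succ n ih =>
      have h1 : δ ^ (n + 1) * r₀ = δ * (δ ^ n * r₀) := by ring
      have h2 := h (δ ^ n * r₀) (by positivity)
        (mul_le_of_le_one_left hr₀.le (pow_le_one₀ hδ.le hδ1.le))
      rw [h1]
      refine h2.trans ((mul_le_mul_right ih _).trans ?_)
      rw [← mul_assoc, ← ENNReal.mul_rpow_of_nonneg _ _ hκ, ← ENNReal.ofReal_mul hδ.le, pow_succ']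
  refine ⟨ENNReal.ofReal (1 / (δ * r₀)) ^ κ * ν (ball x r₀),
    ENNReal.mul_ne_top (ENNReal.rpow_ne_top_of_nonneg hκ ENNReal.ofReal_ne_top) hfin, r₀, hr₀,
    fun r hr hr' => ?_⟩
  obtain ⟨n, hn1, hn2⟩ := exists_nat_pow_near_of_lt_one (x := r / r₀) (by positivity)
    ((div_le_one hr₀).2 hr'.le) hδ hδ1
  have h1 : r ≤ δ ^ n * r₀ := (div_le_iff₀ hr₀).1 hn2
  have h2 : δ ^ n ≤ 1 / (δ * r₀) * r := by
    rw [lt_div_iff₀ hr₀] at hn1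
    rw [div_mul_eq_mul_div, one_mul, le_div_iff₀ (by positivity)]
    calc δ ^ n * (δ * r₀) = δ ^ (n + 1) * r₀ := by ring
      _ ≤ r := hn1.le
  calc ν (ball x r) ≤ ν (ball x (δ ^ n * r₀)) := measure_mono (ball_subset_ball h1)
    _ ≤ _ := hiter n
    _ ≤ ENNReal.ofReal (1 / (δ * r₀) * r) ^ κ * ν (ball x r₀) := by gcongr
    _ = _ := by
      rw [ENNReal.ofReal_mul (by positivity), ENNReal.mul_rpow_of_nonneg _ _ hκ]; ring

/-! ### Invariant measures -/

theorem vInvariantOn_restrict {d : ℕ} {τ : Measure (EuclideanSpace ℝ (Fin d))}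
    {V : Submodule ℝ (EuclideanSpace ℝ (Fin d))} {U : Set (EuclideanSpace ℝ (Fin d))}
    (h : VInvariantOn τ V U) : VInvariantOn (τ.restrict U) V U := by
  intro v hv φ h1 h2 h3
  rw [setIntegral_eq_integral_of_forall_compl_eq_zero]
  · exact h v hv φ h1 h2 h3
  · intro y hy
    have : fderiv ℝ φ y = 0 := by
      by_contra hne
      exact hy (h3 (support_fderiv_subset ℝ hne))
    simp [this]

/-- Translating a test function along `V` does not change its integral against a `V`-invariant
measure, as long as the support stays in the unit ball. -/
theorem integral_translate {d : ℕ} {τ : Measure (EuclideanSpace ℝ (Fin d))} [IsFiniteMeasure τ]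
    {V : Submodule ℝ (EuclideanSpace ℝ (Fin d))} (h : VInvariantOn τ V (ball 0 1))
    {ψ : EuclideanSpace ℝ (Fin d) → ℝ} (hψ : ContDiff ℝ (⊤ : ℕ∞) ψ) (hc : HasCompactSupport ψ)
    {ρ : ℝ} (hsupp : tsupport ψ ⊆ closedBall 0 ρ) {v : EuclideanSpace ℝ (Fin d)} (hv : v ∈ V)
    (hρ : ρ + ‖v‖ < 1) : ∫ y, ψ (y - v) ∂τ = ∫ y, ψ y ∂τ := by
  have hd : Differentiable ℝ ψ := hψ.differentiable (by simp)
  have hcd : Continuous (fderiv ℝ ψ) := hψ.continuous_fderiv (by simp)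
  obtain ⟨C, hC⟩ := (hc.fderiv (𝕜 := ℝ)).exists_bound_of_continuous hcd
  obtain ⟨C', hC'⟩ := hc.exists_bound_of_continuous hψ.continuous
  have hder : ∀ t : ℝ, HasDerivAt (fun t : ℝ => ∫ y, ψ (y - t • v) ∂τ)
      (∫ y, -(fderiv ℝ ψ (y - t • v) v) ∂τ) t := by
    intro t
    refine (hasDerivAt_integral_of_dominated_loc_of_deriv_le (μ := τ)
      (F := fun t y => ψ (y - t • v)) (F' := fun t y => -(fderiv ℝ ψ (y - t • v) v))
      (bound := fun _ => C * ‖v‖) (s := Set.univ) Filter.univ_mem ?_ ?_ ?_ ?_ ?_ ?_).2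
    · exact Eventually.of_forall fun t =>
        (hψ.continuous.comp (by fun_prop)).aestronglyMeasurable
    · exact Integrable.of_bound (hψ.continuous.comp (by fun_prop)).aestronglyMeasurable C'
        (Eventually.of_forall fun y => hC' _)
    · have : Continuous fun y => -(fderiv ℝ ψ (y - t • v) v) :=
        ((hcd.comp (by fun_prop : Continuous fun y => y - t • v)).clm_apply continuous_const).neg
      exact this.aestronglyMeasurable
    · refine Eventually.of_forall fun y t _ => ?_
      rw [norm_neg]
      exact (ContinuousLinearMap.le_opNorm _ _).trans (by gcongr; exact hC _)
    · exact integrable_const _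
    · refine Eventually.of_forall fun y t _ => ?_
      have h1 : HasDerivAt (fun t : ℝ => y - t • v) (-v) t := by
        simpa using ((hasDerivAt_id t).smul_const v).const_sub y
      simpa [Function.comp_def] using (hd (y - t • v)).hasFDerivAt.comp_hasDerivAt t h1
  have hzero : ∀ t ∈ Set.Icc (0 : ℝ) 1, ∫ y, -(fderiv ℝ ψ (y - t • v) v) ∂τ = 0 := by
    intro t ht
    have h1 : tsupport (fun y => ψ (y - t • v)) ⊆ closedBall (t • v) ρ := by
      refine closure_minimal (fun y hy => ?_) isClosed_closedBall
      have := hsupp (subset_tsupport _ hy)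
      rwa [mem_closedBall_zero_iff, ← dist_eq_norm] at this
    have h2 := h v hv (fun y => ψ (y - t • v)) (hψ.comp (by fun_prop))
      (HasCompactSupport.of_support_subset_isCompact (isCompact_closedBall (t • v) ρ)
        ((subset_tsupport _).trans h1)) ?_
    · simp only [fderiv_comp_sub] at h2
      rw [integral_neg, h2, neg_zero]
    · refine h1.trans fun y hy => ?_
      rw [mem_closedBall, dist_eq_norm] at hy
      rw [mem_ball_zero_iff]
      have h3 : ‖t • v‖ ≤ ‖v‖ := by
        rw [norm_smul, Real.norm_eq_abs, abs_of_nonneg ht.1]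
        exact mul_le_of_le_one_left (norm_nonneg _) ht.2
      have h4 : ‖y‖ ≤ ‖y - t • v‖ + ‖t • v‖ := by
        simpa using norm_add_le (y - t • v) (t • v)
      linarith
  have := constant_of_has_deriv_right_zero (f := fun t : ℝ => ∫ y, ψ (y - t • v) ∂τ)
    (a := 0) (b := 1) (fun t _ => (hder t).continuousAt.continuousWithinAt)
    (fun t ht => by
      have := hder t
      rw [hzero t ⟨ht.1, ht.2.le⟩] at this
      exact this.hasDerivWithinAt) 1 (by simp)
  simpa using this

/-- Up to doubling the radius, the mass of a small ball about `0` does not exceed that of its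
translates along `V`; a smooth bump function between the two balls is translated. -/
theorem closedBall_le_ball_translate {d : ℕ} {τ : Measure (EuclideanSpace ℝ (Fin d))}
    [IsFiniteMeasure τ] {V : Submodule ℝ (EuclideanSpace ℝ (Fin d))}
    (h : VInvariantOn τ V (ball 0 1)) {δ : ℝ} (hδ : 0 < δ) {v : EuclideanSpace ℝ (Fin d)}
    (hv : v ∈ V) (hρ : 2 * δ + ‖v‖ < 1) : τ (closedBall 0 δ) ≤ τ (ball v (2 * δ)) := by
  let ψ : ContDiffBump (0 : EuclideanSpace ℝ (Fin d)) := ⟨δ, 2 * δ, hδ, by linarith⟩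
  have hint : Integrable (fun y => ψ y) τ :=
    Integrable.of_bound ψ.continuous.aestronglyMeasurable 1 (Eventually.of_forall fun y => by
      rw [Real.norm_eq_abs, abs_of_nonneg ψ.nonneg]; exact ψ.le_one)
  have hint' : Integrable (fun y => ψ (y - v)) τ :=
    Integrable.of_bound (ψ.continuous.comp (by fun_prop)).aestronglyMeasurable 1
      (Eventually.of_forall fun y => by
        rw [Real.norm_eq_abs, abs_of_nonneg ψ.nonneg]; exact ψ.le_one)
  have h0 : ∫ y, ψ (y - v) ∂τ = ∫ y, ψ y ∂τ :=
    integral_translate h (ρ := 2 * δ) ψ.contDiff ψ.hasCompactSupport ψ.tsupport_eq.le hv hρ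
  have h1 : τ.real (closedBall 0 δ) ≤ ∫ y, ψ y ∂τ := by
    rw [← integral_indicator_one isClosed_closedBall.measurableSet]
    refine integral_mono ((integrable_const (1 : ℝ)).indicator isClosed_closedBall.measurableSet)
      hint fun y => ?_
    by_cases hy : y ∈ closedBall (0 : EuclideanSpace ℝ (Fin d)) δ
    · simp [hy, ψ.one_of_mem_closedBall hy]
    · simp only [Set.indicator_of_notMem hy]; exact ψ.nonneg
  have h2 : ∫ y, ψ (y - v) ∂τ ≤ τ.real (ball v (2 * δ)) := by
    rw [← integral_indicator_one isOpen_ball.measurableSet]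
    refine integral_mono hint' ((integrable_const (1 : ℝ)).indicator isOpen_ball.measurableSet)
      fun y => ?_
    by_cases hy : y ∈ ball v (2 * δ)
    · simp [hy, ψ.le_one]
    · simp only [Set.indicator_of_notMem hy]
      refine (ψ.zero_of_le_dist ?_).le
      rw [dist_zero_right, ← dist_eq_norm]
      simpa using hy
  exact (ENNReal.toReal_le_toReal (measure_ne_top _ _) (measure_ne_top _ _)).1
    (h1.trans (h0.symm.le.trans h2))

/-- A grid of `m ^ ℓ` points in `V`, with spacing `5 δ` along `ℓ` orthonormal directions, gives as
many disjoint balls of radius `2 δ`, each at least as heavy as the closed `δ`-ball about `0`. -/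
theorem pow_mul_closedBall_le {d ℓ m : ℕ} {τ : Measure (EuclideanSpace ℝ (Fin d))}
    [IsFiniteMeasure τ] {V : Submodule ℝ (EuclideanSpace ℝ (Fin d))}
    (h : VInvariantOn τ V (ball 0 1)) (hV : ℓ ≤ Module.finrank ℝ V) {δ : ℝ} (hδ : 0 < δ)
    (hδ8 : δ ≤ 1 / 8) (hm : 5 * δ * m * ℓ ≤ 1 / 2) :
    (m : ℝ≥0∞) ^ ℓ * τ (closedBall 0 δ) ≤ τ Set.univ := by
  classical
  let e : Fin ℓ → EuclideanSpace ℝ (Fin d) := fun i =>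
    (stdOrthonormalBasis ℝ V (Fin.castLE hV i) : EuclideanSpace ℝ (Fin d))
  have heV : ∀ i, e i ∈ V := fun i => Subtype.coe_prop _
  have heo : Orthonormal ℝ e := by
    have := ((stdOrthonormalBasis ℝ V).orthonormal.comp _ (Fin.castLE_injective hV)).comp_linearIsometry
      V.subtypeₗᵢ
    exact this
  -- `hm` keeps the grid within distance `1 / 2` of the origin
  let p : (Fin ℓ → Fin m) → EuclideanSpace ℝ (Fin d) := fun k =>
    ∑ i, (5 * δ * (k i : ℕ) : ℝ) • e i
  have hpV : ∀ k, p k ∈ V := fun k => V.sum_mem fun i _ => V.smul_mem _ (heV i)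
  have hpn : ∀ k, ‖p k‖ ≤ 1 / 2 := by
    intro k
    refine le_trans (norm_sum_le_of_le (f := fun i => (5 * δ * (k i : ℕ) : ℝ) • e i)
      (n := fun _ => 5 * δ * m) Finset.univ fun i _ => ?_) ?_
    · rw [norm_smul, heo.1 i, mul_one, Real.norm_eq_abs, abs_of_nonneg (by positivity)]
      gcongr
      exact (k i).2.le
    · simp only [Finset.sum_const, Finset.card_univ, Fintype.card_fin, nsmul_eq_mul]
      linarith
  have hsep : ∀ k k', k ≠ k' → 5 * δ ≤ dist (p k) (p k') := by
    intro k k' hkk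
    obtain ⟨i, hi⟩ := Function.ne_iff.1 hkk
    have h1 : ⟪e i, p k - p k'⟫ = 5 * δ * ((k i : ℕ) - (k' i : ℕ) : ℝ) := by
      rw [inner_sub_right, heo.inner_right_fintype, heo.inner_right_fintype]; ring
    have h2 : |⟪e i, p k - p k'⟫| ≤ ‖p k - p k'‖ := by
      simpa [heo.1 i] using abs_real_inner_le_norm (e i) (p k - p k')
    have h3 : (1 : ℝ) ≤ |((k i : ℕ) - (k' i : ℕ) : ℝ)| := by
      have : ((k i : ℕ) : ℤ) - ((k' i : ℕ) : ℤ) ≠ 0 := by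
        have : (k i : ℕ) ≠ k' i := fun hh => hi (Fin.ext hh)
        omega
      exact_mod_cast Int.one_le_abs this
    rw [dist_eq_norm]
    rw [h1, abs_mul, abs_of_pos (by positivity : 0 < 5 * δ)] at h2
    nlinarith
  have hdisj : Pairwise fun k k' => Disjoint (ball (p k) (2 * δ)) (ball (p k') (2 * δ)) := by
    intro k k' hkk
    exact ball_disjoint_ball (by linarith [hsep k k' hkk])
  calc (m : ℝ≥0∞) ^ ℓ * τ (closedBall 0 δ)
      = ∑ _k : Fin ℓ → Fin m, τ (closedBall 0 δ) := by simp
    _ ≤ ∑ k : Fin ℓ → Fin m, τ (ball (p k) (2 * δ)) := Finset.sum_le_sum fun k _ =>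
        closedBall_le_ball_translate h hδ (hpV k) (by linarith [hpn k])
    _ = τ (⋃ k, ball (p k) (2 * δ)) := by
        rw [measure_iUnion hdisj fun k => isOpen_ball.measurableSet, tsum_fintype]
    _ ≤ τ Set.univ := measure_mono (Set.subset_univ _)

/-- For `κ < ℓ` there are a radius `δ` and a constant `c < δ ^ κ` such that the closed `δ`-ball
carries at most the fraction `c` of any finite measure that is invariant along at least `ℓ`
directions. Here `δ = 1 / (10 m ℓ)` and `c = m ^ (-ℓ)` with `m ^ (ℓ - κ) > (10 ℓ) ^ κ`. -/
theorem exists_scale {ℓ : ℕ} {κ : ℝ} (hκ : 0 ≤ κ) (hκℓ : κ < ℓ) (d : ℕ) :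
    ∃ δ : ℝ, 0 < δ ∧ δ < 1 ∧ ∃ c < ENNReal.ofReal δ ^ κ,
      ∀ (τ : Measure (EuclideanSpace ℝ (Fin d))) (V : Submodule ℝ (EuclideanSpace ℝ (Fin d))),
        IsFiniteMeasure τ → VInvariantOn τ V (ball 0 1) → ℓ ≤ Module.finrank ℝ V →
        τ (closedBall 0 δ) ≤ c * τ Set.univ := by
  have hℓ0 : (0 : ℝ) < ℓ := hκ.trans_lt hκℓ
  have hℓ1 : (1 : ℝ) ≤ ℓ := by exact_mod_cast Nat.one_le_iff_ne_zero.2 (by rintro rfl; simp at hℓ0)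
  obtain ⟨m, hm1, hm⟩ := ((eventually_ge_atTop 1).and
    (((tendsto_rpow_atTop (sub_pos.2 hκℓ)).comp tendsto_natCast_atTop_atTop).eventually_gt_atTop
      ((10 * (ℓ : ℝ)) ^ κ))).exists
  have hm1' : (1 : ℝ) ≤ m := by exact_mod_cast hm1
  have hm0 : (0 : ℝ) < m := by linarith
  have hlm : (1 : ℝ) ≤ m * ℓ := by nlinarith
  have hδ0 : (0 : ℝ) < 1 / (10 * m * ℓ) := by positivity
  have hδ8 : (1 : ℝ) / (10 * m * ℓ) ≤ 1 / 8 :=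
    one_div_le_one_div_of_le (by norm_num) (by nlinarith)
  refine ⟨1 / (10 * m * ℓ), hδ0, by linarith, ((m : ℝ≥0∞) ^ ℓ)⁻¹, ?_, ?_⟩
  · simp only [Function.comp] at hm
    rw [ENNReal.ofReal_rpow_of_pos hδ0, ← ENNReal.ofReal_natCast, ← ENNReal.ofReal_pow hm0.le,
      ← ENNReal.ofReal_inv_of_pos (by positivity),
      ENNReal.ofReal_lt_ofReal_iff (by positivity), one_div, Real.inv_rpow (by positivity)]
    rw [Real.rpow_sub hm0, Real.rpow_natCast, lt_div_iff₀ (by positivity),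
      ← Real.mul_rpow (by positivity) (by positivity)] at hm
    apply inv_strictAnti₀ (by positivity)
    convert hm using 2
    ring
  · intro τ V hτ hinv hV
    have h1 := pow_mul_closedBall_le (m := m) hinv hV hδ0 hδ8 (le_of_eq (by field_simp; norm_num))
    have hm0' : (m : ℝ≥0∞) ^ ℓ ≠ 0 := by
      rw [Ne, pow_eq_zero_iff', Nat.cast_eq_zero]; omega
    have hmt : (m : ℝ≥0∞) ^ ℓ ≠ ⊤ := by simp
    calc τ (closedBall 0 (1 / (10 * m * ℓ)))
        = ((m : ℝ≥0∞) ^ ℓ)⁻¹ * ((m : ℝ≥0∞) ^ ℓ * τ (closedBall 0 (1 / (10 * m * ℓ)))) := by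
          rw [← mul_assoc, ENNReal.inv_mul_cancel hm0' hmt, one_mul]
      _ ≤ _ := by gcongr

/-! ### Blow-ups and tangent measures -/

theorem blowUp_apply {d : ℕ} (ν : Measure (EuclideanSpace ℝ (Fin d)))
    (x : EuclideanSpace ℝ (Fin d)) {r : ℝ} (hr : 0 < r) {δ : ℝ} (hδ1 : δ ≤ 1) :
    blowUp ν x r (ball 0 δ) = (ν (ball x r))⁻¹ * ν (ball x (δ * r)) := by
  have hmeas : Measurable fun y : EuclideanSpace ℝ (Fin d) => r⁻¹ • (y - x) := by fun_prop
  rw [blowUp, Measure.smul_apply, smul_eq_mul, Measure.restrict_apply isOpen_ball.measurableSet,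
    Set.inter_eq_left.2 (ball_subset_ball hδ1), Measure.map_apply hmeas isOpen_ball.measurableSet]
  congr 2
  ext y
  rw [Set.mem_preimage, mem_ball_zero_iff, mem_ball, dist_eq_norm, norm_smul, norm_inv,
    Real.norm_eq_abs, abs_of_pos hr, inv_mul_lt_iff₀ hr, mul_comm]

theorem blowUp_compl {d : ℕ} (ν : Measure (EuclideanSpace ℝ (Fin d)))
    (x : EuclideanSpace ℝ (Fin d)) (r : ℝ) : blowUp ν x r (closedBall 0 1)ᶜ = 0 := by
  rw [blowUp, Measure.smul_apply, Measure.restrict_apply isClosed_closedBall.measurableSet.compl]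
  have : (closedBall (0 : EuclideanSpace ℝ (Fin d)) 1)ᶜ ∩ ball 0 1 = ∅ := by
    rw [Set.eq_empty_iff_forall_notMem]
    exact fun y hy => hy.1 (ball_subset_closedBall hy.2)
  simp [this]

theorem blowUp_isProbabilityMeasure {d : ℕ} (ν : Measure (EuclideanSpace ℝ (Fin d)))
    (x : EuclideanSpace ℝ (Fin d)) {r : ℝ} (hr : 0 < r) (h0 : ν (ball x r) ≠ 0)
    (ht : ν (ball x r) ≠ ⊤) : IsProbabilityMeasure (blowUp ν x r) := by
  constructor
  have h1 : blowUp ν x r Set.univ = blowUp ν x r (ball 0 1) := by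
    simp [blowUp, Measure.restrict_apply isOpen_ball.measurableSet]
  rw [h1, blowUp_apply ν x hr le_rfl, one_mul, ENNReal.inv_mul_cancel h0 ht]

/-- Compactness of blow-ups: a lower mass bound on a closed ball along a sequence of scales
passes to some tangent measure. -/
theorem exists_tangent {d : ℕ} (ν : Measure (EuclideanSpace ℝ (Fin d)))
    (x : EuclideanSpace ℝ (Fin d)) (r : ℕ → ℝ) (hr : ∀ j, 0 < r j) (hr0 : Tendsto r atTop (𝓝 0))
    (h0 : ∀ j, ν (ball x (r j)) ≠ 0) (ht : ∀ j, ν (ball x (r j)) ≠ ⊤) {δ : ℝ} {a : ℝ≥0∞}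
    (ha : ∀ j, a ≤ blowUp ν x (r j) (closedBall 0 δ)) :
    ∃ τ, IsProbTangent ν x τ ∧ IsProbabilityMeasure τ ∧ a ≤ τ (closedBall 0 δ) := by
  let γ : ℕ → ProbabilityMeasure (EuclideanSpace ℝ (Fin d)) := fun j =>
    ⟨blowUp ν x (r j), blowUp_isProbabilityMeasure ν x (hr j) (h0 j) (ht j)⟩
  have hcpt : IsCompact (closure (Set.range γ)) := by
    apply isCompact_closure_of_isTightMeasureSet
    rw [isTightMeasureSet_iff_exists_isCompact_measure_compl_le]
    refine fun ε _ => ⟨closedBall 0 1, isCompact_closedBall _ _, ?_⟩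
    rintro _ ⟨_, ⟨j, rfl⟩, rfl⟩
    exact (blowUp_compl ν x (r j)).le.trans zero_le
  obtain ⟨τ, -, φ, hφ, hlim⟩ := hcpt.tendsto_subseq fun j => subset_closure (Set.mem_range_self j)
  -- mass bounds on closed sets are upper semicontinuous
  have hclosed : ∀ (F : Set (EuclideanSpace ℝ (Fin d))) (b : ℝ≥0∞), IsClosed F →
      (∀ j, b ≤ blowUp ν x (r j) F) → b ≤ (τ : Measure (EuclideanSpace ℝ (Fin d))) F := by
    intro F b hF hb
    refine le_trans ?_ (ProbabilityMeasure.limsup_measure_closed_le_of_tendsto hlim hF)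
    exact le_limsup_of_frequently_le (Frequently.of_forall fun j => hb (φ j))
  have hτ : (τ : Measure (EuclideanSpace ℝ (Fin d))) (closedBall 0 1)ᶜ = 0 := by
    rw [prob_compl_eq_zero_iff isClosed_closedBall.measurableSet]
    refine le_antisymm prob_le_one (hclosed _ 1 isClosed_closedBall fun j => ?_)
    have := blowUp_isProbabilityMeasure ν x (hr j) (h0 j) (ht j)
    rw [(prob_compl_eq_zero_iff isClosed_closedBall.measurableSet).1 (blowUp_compl ν x (r j))]
  refine ⟨τ, ⟨hτ, r ∘ φ, fun j => hr _, hr0.comp hφ.tendsto_atTop, fun j => h0 _, ?_⟩,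
    inferInstance, hclosed _ a isClosed_closedBall ha⟩
  intro f hf
  -- all measures live on the closed unit ball, so the test function may be truncated
  obtain ⟨M, hM⟩ := (isCompact_closedBall (0 : EuclideanSpace ℝ (Fin d)) 1).exists_bound_of_continuousOn
    hf.continuousOn
  let g : BoundedContinuousFunction (EuclideanSpace ℝ (Fin d)) ℝ :=
    BoundedContinuousFunction.ofNormedAddCommGroup (fun y => max (-|M|) (min (f y) |M|))
      (by fun_prop) |M| fun y => by
        rw [Real.norm_eq_abs, abs_le]
        exact ⟨le_max_left _ _, max_le (by linarith [abs_nonneg M]) (min_le_right _ _)⟩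
  have hgf : ∀ μ : Measure (EuclideanSpace ℝ (Fin d)), μ (closedBall 0 1)ᶜ = 0 →
      ∫ y, g y ∂μ = ∫ y, f y ∂μ := by
    intro μ hμ
    refine integral_congr_ae ?_
    have : ∀ᵐ y ∂μ, y ∈ closedBall (0 : EuclideanSpace ℝ (Fin d)) 1 := hμ
    filter_upwards [this] with y hy
    have h1 := abs_le.1 ((hM y hy).trans (le_abs_self M))
    change max (-|M|) (min (f y) |M|) = f y
    rw [min_eq_left h1.2, max_eq_right h1.1]
  have h1 := ProbabilityMeasure.tendsto_iff_forall_integral_tendsto.1 hlim g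
  rw [hgf _ hτ] at h1
  refine h1.congr fun j => ?_
  exact hgf _ (blowUp_compl ν x (r (φ j)))

/-- The small-ball bound passes to finite sums, because it is linear in the measure. Each summand
is finite on the unit ball, being dominated there by `τ`. -/
theorem tangent_closedBall_le {d ℓ : ℕ} {τ : Measure (EuclideanSpace ℝ (Fin d))}
    [IsProbabilityMeasure τ] {k : ℕ} {τs : Fin k → Measure (EuclideanSpace ℝ (Fin d))}
    {Vs : Fin k → Submodule ℝ (EuclideanSpace ℝ (Fin d))}
    (hV : ∀ h, ℓ ≤ Module.finrank ℝ (Vs h)) (hinv : ∀ h, VInvariantOn (τs h) (Vs h) (ball 0 1))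
    (hτ : τ = (∑ h, τs h).restrict (ball 0 1)) {δ : ℝ} {c : ℝ≥0∞}
    (hc : ∀ (τ : Measure (EuclideanSpace ℝ (Fin d))) (V : Submodule ℝ (EuclideanSpace ℝ (Fin d))),
      IsFiniteMeasure τ → VInvariantOn τ V (ball 0 1) → ℓ ≤ Module.finrank ℝ V →
      τ (closedBall 0 δ) ≤ c * τ Set.univ) :
    τ (closedBall 0 δ) ≤ c := by
  have hsum : ∀ s, MeasurableSet s → τ s = ∑ h, (τs h).restrict (ball 0 1) s := by
    intro s hs
    simp only [hτ, Measure.restrict_apply hs, Measure.finsetSum_apply]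
  have hle : ∀ h, IsFiniteMeasure ((τs h).restrict (ball 0 1)) := by
    intro h
    refine ⟨lt_of_le_of_lt ?_ (measure_lt_top τ Set.univ)⟩
    rw [hsum _ MeasurableSet.univ]
    exact Finset.single_le_sum (f := fun h => (τs h).restrict (ball 0 1) Set.univ)
      (fun _ _ => zero_le) (Finset.mem_univ h)
  calc τ (closedBall 0 δ) = ∑ h, (τs h).restrict (ball 0 1) (closedBall 0 δ) :=
        hsum _ isClosed_closedBall.measurableSet
    _ ≤ ∑ h, c * (τs h).restrict (ball 0 1) Set.univ :=
        Finset.sum_le_sum fun h _ => hc _ (Vs h) (hle h)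
          (vInvariantOn_restrict (hinv h)) (hV h)
    _ = c * τ Set.univ := by rw [← Finset.mul_sum, hsum _ MeasurableSet.univ]
    _ = c := by simp

/-! ### The invariance criterion -/

/-- **The invariance criterion.** Let `σ = σ^{ac} ℒ^d + σ^s` be a positive Radon measure on the
open set `Ω ⊆ ℝ^d` and `0 ≤ ℓ ≤ d`.  If at `σ^s`-a.e. `x` every probability tangent measure
`τ ∈ Tan(σ^s, x)` splits on `B₁` as a finite sum `τ = (τ₁ + ⋯ + τ_k) ⌞ B₁` of positive measures
`τ_h`, each `V_h`-invariant on `B₁` for some subspace `V_h` with `dim V_h ≥ ℓ`, then `σ ≪ ℋ^κ`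
for every `0 ≤ κ < ℓ`; in particular `dim_ℋ σ ≥ ℓ`. -/
theorem invariance_criterion {d : ℕ} (ℓ : ℕ) (hℓ : ℓ ≤ d)
    (Ω : Set (EuclideanSpace ℝ (Fin d))) (hΩ : IsOpen Ω)
    (σ σs : Measure (EuclideanSpace ℝ (Fin d))) (a : EuclideanSpace ℝ (Fin d) → ℝ≥0∞)
    -- Lebesgue decomposition `σ = σ^{ac} ℒ^d + σ^s`:
    (hdecomp : σ = volume.withDensity a + σs) (hsing : σs ⟂ₘ volume)
    -- `σ` is a Radon measure on `Ω`:
    (hloc : ∀ K : Set (EuclideanSpace ℝ (Fin d)), K ⊆ Ω → IsCompact K → σ K < ⊤)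
    (hsupp : σ Ωᶜ = 0)
    -- splitting of the tangent measures of `σ^s`:
    (hTan : ∀ᵐ x ∂σs, ∀ τ : Measure (EuclideanSpace ℝ (Fin d)), IsProbTangent σs x τ →
      ∃ (k : ℕ) (τs : Fin k → Measure (EuclideanSpace ℝ (Fin d)))
        (Vs : Fin k → Submodule ℝ (EuclideanSpace ℝ (Fin d))),
        (∀ h, ℓ ≤ Module.finrank ℝ (Vs h)) ∧
        (∀ h, VInvariantOn (τs h) (Vs h) (ball 0 1)) ∧
        τ = (∑ h, τs h).restrict (ball 0 1)) :
    ∀ κ : ℝ, 0 ≤ κ → κ < (ℓ : ℝ) → σ ≪ μH[κ] := by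
  intro κ hκ hκℓ
  have hac : volume.withDensity a ≪ μH[κ] :=
    (withDensity_absolutelyContinuous _ _).trans
      (volume_absolutelyContinuous_hausdorffMeasure (hκℓ.trans_le (by exact_mod_cast hℓ)))
  have hσs : σs ≤ σ := by rw [hdecomp]; exact Measure.le_add_left le_rfl
  suffices hs : σs ≪ μH[κ] by
    intro A hA
    rw [hdecomp, Measure.add_apply, hac hA, hs hA, add_zero]
  have hΩae : ∀ᵐ x ∂σs, x ∈ Ω := nonpos_iff_eq_zero.1 ((hσs _).trans hsupp.le)
  obtain ⟨δ, hδ0, hδ1, c, hcδ, hc⟩ := exists_scale hκ hκℓ d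
  refine absolutelyContinuous_of_growth σs ?_
  filter_upwards [hTan, hΩae] with x hx hxΩ
  obtain ⟨R, hR, hRΩ⟩ := nhds_basis_closedBall.mem_iff.1 (hΩ.mem_nhds hxΩ)
  have hfin : ∀ r ≤ R, σs (ball x r) ≠ ⊤ := fun r hr =>
    ((measure_mono (ball_subset_closedBall.trans (closedBall_subset_closedBall hr))).trans_lt
      ((hσs _).trans_lt (hloc _ hRΩ (isCompact_closedBall x R)))).ne
  have hdecay : ∀ᶠ r in 𝓝[>] (0 : ℝ),
      σs (ball x (δ * r)) ≤ ENNReal.ofReal δ ^ κ * σs (ball x r) := by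
    by_contra hcon
    -- a sequence of bad scales would produce a tangent measure with too much mass near the origin
    have hfreq : ∃ᶠ r in 𝓝[>] (0 : ℝ),
        ENNReal.ofReal δ ^ κ * σs (ball x r) < σs (ball x (δ * r)) ∧ r ∈ Set.Ioo 0 R := by
      refine ((not_eventually.1 hcon).and_eventually (Ioo_mem_nhdsGT hR)).mono ?_
      exact fun r hr => ⟨not_le.1 hr.1, hr.2⟩
    obtain ⟨r, hr0, hr⟩ := exists_seq_forall_of_frequently hfreq
    have hsub : ∀ j, ball x (δ * r j) ⊆ ball x (r j) := fun j =>
      ball_subset_ball (mul_le_of_le_one_left (hr j).2.1.le hδ1.le)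
    have hne : ∀ j, σs (ball x (r j)) ≠ 0 := fun j h0 =>
      (hr j).1.not_ge (by simp [measure_mono_null (hsub j) h0])
    have hft : ∀ j, σs (ball x (r j)) ≠ ⊤ := fun j => hfin _ (hr j).2.2.le
    obtain ⟨τ, hτ, hprob, hτδ⟩ := exists_tangent σs x r (fun j => (hr j).2.1)
      (hr0.mono_right nhdsWithin_le_nhds) hne hft (δ := δ) (a := ENNReal.ofReal δ ^ κ) fun j => by
        refine le_trans ?_ (measure_mono ball_subset_closedBall)
        rw [blowUp_apply σs x (hr j).2.1 hδ1.le, ← ENNReal.div_eq_inv_mul,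
          ENNReal.le_div_iff_mul_le (Or.inl (hne j)) (Or.inl (hft j))]
        exact (hr j).1.le
    obtain ⟨k, τs, Vs, hV, hinv, hsum⟩ := hx τ hτ
    exact (hτδ.trans (tangent_closedBall_le hV hinv hsum hc)).not_gt hcδ
  obtain ⟨ρ, hρ, hρd⟩ := mem_nhdsGT_iff_exists_Ioc_subset.1 hdecay
  exact growth_of_decay_s10 σs hκ hδ0 hδ1 (lt_min hR hρ) x (hfin _ (min_le_left _ _))
    fun r h1 h2 => hρd ⟨h1, h2.trans (min_le_right _ _)⟩
end

section
/- Let Ω ⊆ ℝ^d be open, E, F finite-dimensional real inner product spaces, P_0, P_1, …, P_d : E → F linear, and let μ be an E-valued Radon measure on Ω satisfying P(D)μ := ∑_{i=1}^d P_i ∂_i μ + P_0 μ = 0 in the sense of distributions. Then for every x ∈ Ω, every probability tangent measure σ ∈ Tan(μ, x) satisfies the homogeneous principal-part equation ∑_{i=1}^d P_i ∂_i σ = 0 in the sense of distributions on the open unit ball B_1, i.e., ∑_{i=1}^d ∫_{B_1} ⟨P_i(dσ/d|σ|(z)), ∂_i φ(z)⟩ d|σ|(z) = 0 for every smooth compactly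 supported φ : B_1 → F. -/
/-!
The equation is invariant under blow-up up to a factor `r` in front of the zeroth-order term.
Given `φ` supported in `B₁`, test the equation on `Ω` with `ψ y = φ ((y - x) / r)`, which is
supported in `B_r(x) ⊆ Ω` for small `r`.  Since `∂ᵢψ = r⁻¹ (∂ᵢφ) ((· - x) / r)`, the blow-up of `μ`
paired with `∑ᵢ Pᵢ^* ∂ᵢφ` equals `r ν(B_r(x))⁻¹ ∫ ⟪P₀ g, ψ⟫ dν`
(`sum_integral_blowUp_eq`), and this is at most `r ‖P₀‖ sup |φ|` in absolute value because
`|g| = 1` and `ψ` vanishes off `B_r(x)` (`abs_sum_integral_blowUp_le`).  Letting `r = rⱼ ↓ 0`,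
weak-* convergence applied to each continuous field `Pᵢ^* ∂ᵢφ` separately identifies the limit of
the left-hand side with the claimed sum; working termwise avoids combining integrals against `τ`,
which could be infinite.
-/

open MeasureTheory Metric Filter
open scoped ENNReal RealInnerProductSpace Topology

/-- The set `{ξ ∈ ℝ^d : P(ξ)e = 0}`, where `P(ξ) = ∑ᵢ ξᵢ Pᵢ` is the principal symbol of the
first-order operator with coefficients `P i`; it is a linear subspace of `ℝ^d`. -/
noncomputable def kerSymb {d : ℕ} {E F : Type*} [NormedAddCommGroup E] [InnerProductSpace ℝ E]
    [NormedAddCommGroup F] [InnerProductSpace ℝ F] (P : Fin d → E →ₗ[ℝ] F) (e : E) :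
    Submodule ℝ (EuclideanSpace ℝ (Fin d)) where
  carrier := {ξ | ∑ i, ξ i • P i e = 0}
  zero_mem' := by simp
  add_mem' {x y} hx hy := by
    simp only [Set.mem_setOf_eq] at hx hy ⊢
    have : ∑ i, (x + y) i • P i e = (∑ i, x i • P i e) + ∑ i, y i • P i e := by
      rw [← Finset.sum_add_distrib]
      exact Finset.sum_congr rfl fun i _ => by simp [PiLp.add_apply, add_smul]
    rw [this, hx, hy, add_zero]
  smul_mem' c x hx := by
    simp only [Set.mem_setOf_eq] at hx ⊢
    have : ∑ i, (c • x) i • P i e = c • ∑ i, x i • P i e := by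
      rw [Finset.smul_sum]
      exact Finset.sum_congr rfl fun i _ => by simp [PiLp.smul_apply, smul_smul]
    rw [this, hx, smul_zero]

/-- `ℓ_P`, the minimal dimension of `{ξ : P(ξ)e = 0}ᗮ` over nonzero `e ∈ E`. -/
noncomputable def ellP {d : ℕ} {E F : Type*} [NormedAddCommGroup E] [InnerProductSpace ℝ E]
    [NormedAddCommGroup F] [InnerProductSpace ℝ F] (P : Fin d → E →ₗ[ℝ] F) : ℕ :=
  sInf {n : ℕ | ∃ e : E, e ≠ 0 ∧ Module.finrank ℝ ((kerSymb P e)ᗮ) = n}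

/-- `P(D)μ = 0` in the sense of distributions on `Ω`, for the `E`-valued measure `μ = g ν`
(`ν = |μ|`, `g` the polar): for every smooth compactly supported test function `φ : Ω → F`,
`∑ᵢ ∫ ⟪Pᵢ(g x), ∂ᵢφ x⟫ dν = ∫ ⟪P₀(g x), φ x⟫ dν`. -/
def SolvesPDE {d : ℕ} {E F : Type*} [NormedAddCommGroup E] [InnerProductSpace ℝ E]
    [NormedAddCommGroup F] [InnerProductSpace ℝ F]
    (Ω : Set (EuclideanSpace ℝ (Fin d))) (P₀ : E →ₗ[ℝ] F) (P : Fin d → E →ₗ[ℝ] F)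
    (ν : Measure (EuclideanSpace ℝ (Fin d))) (g : EuclideanSpace ℝ (Fin d) → E) : Prop :=
  ∀ φ : EuclideanSpace ℝ (Fin d) → F, ContDiff ℝ (⊤ : ℕ∞) φ → HasCompactSupport φ → tsupport φ ⊆ Ω →
    (∑ i : Fin d, ∫ x, ⟪P i (g x), fderiv ℝ φ x (EuclideanSpace.single i 1)⟫ ∂ν)
      = ∫ x, ⟪P₀ (g x), φ x⟫ ∂ν

theorem integral_blowUp {d : ℕ} (ν : Measure (EuclideanSpace ℝ (Fin d)))
    (x : EuclideanSpace ℝ (Fin d)) {r : ℝ} (hr : 0 < r) (f : EuclideanSpace ℝ (Fin d) → ℝ) :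
    ∫ z, f z ∂(blowUp ν x r)
      = (ν (ball x r)).toReal⁻¹ * ∫ y in ball x r, f (r⁻¹ • (y - x)) ∂ν := by
  -- `T^{r,x}` is a homeomorphism, so the change of variables needs no measurability of `f`.
  have hemb : MeasurableEmbedding (fun y : EuclideanSpace ℝ (Fin d) => r⁻¹ • (y - x)) :=
    ((Homeomorph.subRight x).trans
      (Homeomorph.smulOfNeZero r⁻¹ (inv_ne_zero hr.ne'))).measurableEmbedding
  have hpre : (fun y : EuclideanSpace ℝ (Fin d) => r⁻¹ • (y - x)) ⁻¹' ball 0 1 = ball x r := by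
    ext y
    simp only [Set.mem_preimage, mem_ball, dist_eq_norm, sub_zero, norm_smul, norm_inv,
      Real.norm_eq_abs, abs_of_pos hr]
    rw [inv_mul_lt_iff₀ hr, mul_one]
  rw [blowUp, integral_smul_measure, hemb.setIntegral_map, hpre, ENNReal.toReal_inv, smul_eq_mul]

theorem fderiv_comp_rescale {d : ℕ} {F : Type*} [NormedAddCommGroup F] [NormedSpace ℝ F]
    {φ : EuclideanSpace ℝ (Fin d) → F} (hφ : Differentiable ℝ φ)
    (x : EuclideanSpace ℝ (Fin d)) (c : ℝ) (y v : EuclideanSpace ℝ (Fin d)) :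
    fderiv ℝ (fun y => φ (c • (y - x))) y v = c • fderiv ℝ φ (c • (y - x)) v := by
  have h1 : HasFDerivAt (fun y : EuclideanSpace ℝ (Fin d) => c • (y - x))
      (c • ContinuousLinearMap.id ℝ (EuclideanSpace ℝ (Fin d))) y :=
    ((hasFDerivAt_id y).sub_const x).const_smul c
  have h2 := (hφ (c • (y - x))).hasFDerivAt.comp y h1
  have h3 : fderiv ℝ (fun y => φ (c • (y - x))) y = _ := h2.fderiv
  rw [h3]
  simp

theorem hasCompactSupport_comp_rescale {d : ℕ} {F : Type*} [NormedAddCommGroup F]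
    {φ : EuclideanSpace ℝ (Fin d) → F} (hφ : HasCompactSupport φ)
    (x : EuclideanSpace ℝ (Fin d)) {r : ℝ} (hr : 0 < r) :
    HasCompactSupport (fun y => φ (r⁻¹ • (y - x))) :=
  hφ.comp_homeomorph ((Homeomorph.subRight x).trans
    (Homeomorph.smulOfNeZero r⁻¹ (inv_ne_zero hr.ne')))

theorem tsupport_comp_rescale_subset {d : ℕ} {F : Type*} [NormedAddCommGroup F]
    {φ : EuclideanSpace ℝ (Fin d) → F} (hφ : tsupport φ ⊆ ball 0 1)
    (x : EuclideanSpace ℝ (Fin d)) {r : ℝ} (hr : 0 < r) :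
    tsupport (fun y => φ (r⁻¹ • (y - x))) ⊆ ball x r := by
  intro y hy
  have hy' := hφ (tsupport_comp_subset_preimage φ
    (f := fun y : EuclideanSpace ℝ (Fin d) => r⁻¹ • (y - x)) (by fun_prop) hy)
  simp only [mem_ball_zero_iff, norm_smul, norm_inv, Real.norm_eq_abs, abs_of_pos hr] at hy'
  rw [inv_mul_lt_iff₀ hr, mul_one] at hy'
  rwa [mem_ball, dist_eq_norm]

/-- The rescaled equation: testing `P(D)μ = 0` with `φ ((· - x) / r)` shows that the blow-up at
scale `r` solves the principal-part equation with the zeroth-order term carrying a factor `r`. -/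
theorem sum_integral_blowUp_eq
    {d : ℕ} {E F : Type*} [NormedAddCommGroup E] [InnerProductSpace ℝ E] [FiniteDimensional ℝ E]
    [NormedAddCommGroup F] [InnerProductSpace ℝ F] [FiniteDimensional ℝ F]
    {Ω : Set (EuclideanSpace ℝ (Fin d))} {P₀ : E →ₗ[ℝ] F} {P : Fin d → E →ₗ[ℝ] F}
    {ν : Measure (EuclideanSpace ℝ (Fin d))} {g : EuclideanSpace ℝ (Fin d) → E}
    (hPDE : SolvesPDE Ω P₀ P ν g) {x : EuclideanSpace ℝ (Fin d)} {r : ℝ} (hr : 0 < r)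
    (hball : ball x r ⊆ Ω)
    {φ : EuclideanSpace ℝ (Fin d) → F} (hφ : ContDiff ℝ (⊤ : ℕ∞) φ) (hc : HasCompactSupport φ)
    (hs : tsupport φ ⊆ ball (0 : EuclideanSpace ℝ (Fin d)) 1) :
    ∑ i : Fin d, ∫ z, ⟪LinearMap.adjoint (P i) (fderiv ℝ φ z (EuclideanSpace.single i 1)),
        g (x + r • z)⟫ ∂(blowUp ν x r)
      = r * ((ν (ball x r)).toReal⁻¹
          * ∫ y in ball x r, ⟪P₀ (g y), φ (r⁻¹ • (y - x))⟫ ∂ν) := by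
  have hsψ := tsupport_comp_rescale_subset hs x hr
  have hzero : ∀ y, y ∉ ball x r → y ∉ tsupport (fun y => φ (r⁻¹ • (y - x))) :=
    fun y hy hy' => hy (hsψ hy')
  have hpde := hPDE (fun y => φ (r⁻¹ • (y - x))) (hφ.comp (by fun_prop))
    (hasCompactSupport_comp_rescale hc x hr) (hsψ.trans hball)
  have hrhs : ∫ y in ball x r, ⟪P₀ (g y), φ (r⁻¹ • (y - x))⟫ ∂ν
      = ∫ y, ⟪P₀ (g y), φ (r⁻¹ • (y - x))⟫ ∂ν := by
    refine setIntegral_eq_integral_of_forall_compl_eq_zero fun y hy => ?_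
    have : φ (r⁻¹ • (y - x)) = 0 := image_eq_zero_of_notMem_tsupport
      (f := fun y => φ (r⁻¹ • (y - x))) (hzero y hy)
    rw [this, inner_zero_right]
  rw [hrhs, ← hpde, Finset.mul_sum, Finset.mul_sum]
  refine Finset.sum_congr rfl fun i _ => ?_
  rw [integral_blowUp ν x hr]
  have hi : ∫ y, ⟪P i (g y), fderiv ℝ (fun y => φ (r⁻¹ • (y - x))) y
        (EuclideanSpace.single i 1)⟫ ∂ν
      = ∫ y in ball x r, ⟪P i (g y), fderiv ℝ (fun y => φ (r⁻¹ • (y - x))) y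
        (EuclideanSpace.single i 1)⟫ ∂ν := by
    refine (setIntegral_eq_integral_of_forall_compl_eq_zero fun y hy => ?_).symm
    rw [fderiv_of_notMem_tsupport ℝ (hzero y hy)]
    simp
  rw [hi, mul_left_comm, ← integral_const_mul r]
  congr 1
  refine integral_congr_ae (Eventually.of_forall fun y => ?_)
  have hy : x + r • r⁻¹ • (y - x) = y := by
    rw [smul_inv_smul₀ hr.ne']
    abel
  simp only [hy, fderiv_comp_rescale (hφ.differentiable (by simp)), LinearMap.adjoint_inner_left,
    inner_smul_right, mul_inv_cancel_left₀ hr.ne']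
  exact real_inner_comm _ _

/-- The zeroth-order contribution at scale `r` is `O(r)`, uniformly in the measure. -/
theorem abs_sum_integral_blowUp_le
    {d : ℕ} {E F : Type*} [NormedAddCommGroup E] [InnerProductSpace ℝ E] [FiniteDimensional ℝ E]
    [NormedAddCommGroup F] [InnerProductSpace ℝ F] [FiniteDimensional ℝ F]
    {Ω : Set (EuclideanSpace ℝ (Fin d))} {P₀ : E →ₗ[ℝ] F} {P : Fin d → E →ₗ[ℝ] F}
    {ν : Measure (EuclideanSpace ℝ (Fin d))} {g : EuclideanSpace ℝ (Fin d) → E}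
    (hpolar : ∀ᵐ x ∂ν, ‖g x‖ = 1)
    (hPDE : SolvesPDE Ω P₀ P ν g) {x : EuclideanSpace ℝ (Fin d)} {r : ℝ} (hr : 0 < r)
    (hball : ball x r ⊆ Ω) (hfin : ν (ball x r) < ⊤)
    {φ : EuclideanSpace ℝ (Fin d) → F} (hφ : ContDiff ℝ (⊤ : ℕ∞) φ) (hc : HasCompactSupport φ)
    (hs : tsupport φ ⊆ ball (0 : EuclideanSpace ℝ (Fin d)) 1)
    {C : ℝ} (hC : ∀ z, ‖φ z‖ ≤ C) :
    |∑ i : Fin d, ∫ z, ⟪LinearMap.adjoint (P i) (fderiv ℝ φ z (EuclideanSpace.single i 1)),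
        g (x + r • z)⟫ ∂(blowUp ν x r)|
      ≤ r * (‖P₀.toContinuousLinearMap‖ * C) := by
  have hC0 : 0 ≤ C := (norm_nonneg _).trans (hC 0)
  have hint : ‖∫ y in ball x r, ⟪P₀ (g y), φ (r⁻¹ • (y - x))⟫ ∂ν‖
      ≤ (‖P₀.toContinuousLinearMap‖ * C) * (ν (ball x r)).toReal := by
    refine norm_setIntegral_le_of_norm_le_const_ae hfin ?_
    filter_upwards [ae_restrict_of_ae hpolar] with y hy
    have hP : ‖P₀ (g y)‖ ≤ ‖P₀.toContinuousLinearMap‖ := by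
      simpa [hy] using P₀.toContinuousLinearMap.le_opNorm (g y)
    exact (norm_inner_le_norm _ _).trans
      (mul_le_mul hP (hC _) (norm_nonneg _) (norm_nonneg _))
  rw [sum_integral_blowUp_eq hPDE hr hball hφ hc hs, abs_mul, abs_of_pos hr, abs_mul, abs_inv,
    abs_of_nonneg ENNReal.toReal_nonneg]
  refine mul_le_mul_of_nonneg_left ?_ hr.le
  refine (mul_le_mul_of_nonneg_left hint (inv_nonneg.2 ENNReal.toReal_nonneg)).trans ?_
  rw [mul_left_comm]
  exact mul_le_of_le_one_right (by positivity) inv_mul_le_one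

/-- **Tangent measures of PDE-constrained measures solve the homogeneous principal-part
equation.** Let `μ = g|μ|` (with `|μ| = ν`) be an `E`-valued Radon measure on the open set
`Ω ⊆ ℝ^d` solving `P(D)μ = ∑ᵢ Pᵢ ∂ᵢ μ + P₀ μ = 0` distributionally, and let `x ∈ Ω`.  Every
probability tangent measure `σ = h τ ∈ Tan(μ, x)` (a weak-* limit of normalized blow-ups
`γⱼ = |μ|(B_{rⱼ}(x))⁻¹ ((T^{rⱼ,x})_# μ) ⌞ B₁`, `rⱼ ↓ 0`, with `τ = |σ|` and polar `h`) solves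
`∑ᵢ Pᵢ ∂ᵢ σ = 0` distributionally on `B₁`. -/
theorem tangent_measures_solve_principal_part
    {d : ℕ} {E F : Type*} [NormedAddCommGroup E] [InnerProductSpace ℝ E] [FiniteDimensional ℝ E]
    [NormedAddCommGroup F] [InnerProductSpace ℝ F] [FiniteDimensional ℝ F]
    (Ω : Set (EuclideanSpace ℝ (Fin d))) (hΩ : IsOpen Ω)
    (P₀ : E →ₗ[ℝ] F) (P : Fin d → E →ₗ[ℝ] F)
    (ν : Measure (EuclideanSpace ℝ (Fin d)))
    (hloc : ∀ K : Set (EuclideanSpace ℝ (Fin d)), K ⊆ Ω → IsCompact K → ν K < ⊤)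
    (hsupp : ν Ωᶜ = 0)
    (g : EuclideanSpace ℝ (Fin d) → E) (hg : AEStronglyMeasurable g ν)
    (hpolar : ∀ᵐ x ∂ν, ‖g x‖ = 1)
    (hPDE : SolvesPDE Ω P₀ P ν g)
    (x : EuclideanSpace ℝ (Fin d)) (hx : x ∈ Ω)
    -- `σ = h τ` is a probability tangent measure of `μ` at `x`, along the scales `r j ↓ 0`:
    (τ : Measure (EuclideanSpace ℝ (Fin d))) (hτ : τ (closedBall (0 : EuclideanSpace ℝ (Fin d)) 1)ᶜ = 0)
    (h : EuclideanSpace ℝ (Fin d) → E) (hh : AEStronglyMeasurable h τ)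
    (hhnorm : ∀ᵐ z ∂τ, ‖h z‖ = 1)
    (r : ℕ → ℝ) (hrpos : ∀ j, 0 < r j) (hr0 : Tendsto r atTop (𝓝 0))
    (hne : ∀ j, ν (ball x (r j)) ≠ 0)
    (hconv : ∀ f : EuclideanSpace ℝ (Fin d) → E, Continuous f →
      Tendsto (fun j => ∫ z, ⟪f z, g (x + r j • z)⟫ ∂(blowUp ν x (r j))) atTop
        (𝓝 (∫ z, ⟪f z, h z⟫ ∂τ))) :
    -- conclusion: `∑ᵢ Pᵢ ∂ᵢ σ = 0` distributionally on `B₁`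
    ∀ φ : EuclideanSpace ℝ (Fin d) → F, ContDiff ℝ (⊤ : ℕ∞) φ → HasCompactSupport φ →
      tsupport φ ⊆ ball (0 : EuclideanSpace ℝ (Fin d)) 1 →
      (∑ i : Fin d, ∫ z, ⟪P i (h z), fderiv ℝ φ z (EuclideanSpace.single i 1)⟫ ∂τ) = 0 := by
  intro φ hφ hc hs
  have hlim : Tendsto (fun j => ∑ i : Fin d,
      ∫ z, ⟪LinearMap.adjoint (P i) (fderiv ℝ φ z (EuclideanSpace.single i 1)),
        g (x + r j • z)⟫ ∂(blowUp ν x (r j))) atTop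
      (𝓝 (∑ i : Fin d, ∫ z, ⟪LinearMap.adjoint (P i)
        (fderiv ℝ φ z (EuclideanSpace.single i 1)), h z⟫ ∂τ)) := by
    refine tendsto_finsetSum _ fun i _ => hconv _ ?_
    exact (LinearMap.continuous_of_finiteDimensional (LinearMap.adjoint (P i))).comp
      ((hφ.continuous_fderiv (by simp)).clm_apply continuous_const)
  obtain ⟨C, hC⟩ := hc.exists_bound_of_continuous hφ.continuous
  obtain ⟨ε, hε, hεΩ⟩ := Metric.isOpen_iff.1 hΩ x hx
  have hzero : Tendsto (fun j => ∑ i : Fin d,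
      ∫ z, ⟪LinearMap.adjoint (P i) (fderiv ℝ φ z (EuclideanSpace.single i 1)),
        g (x + r j • z)⟫ ∂(blowUp ν x (r j))) atTop (𝓝 0) := by
    refine squeeze_zero_norm' ?_
      (by simpa using hr0.mul_const (‖P₀.toContinuousLinearMap‖ * C))
    filter_upwards [hr0.eventually_lt_const hε] with j hj
    have hcl : closedBall x (r j) ⊆ Ω := (closedBall_subset_ball hj).trans hεΩ
    exact abs_sum_integral_blowUp_le hpolar hPDE (hrpos j) (ball_subset_closedBall.trans hcl)
      ((measure_mono ball_subset_closedBall).trans_lt (hloc _ hcl (isCompact_closedBall x (r j))))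
      hφ hc hs hC
  rw [← tendsto_nhds_unique hlim hzero]
  refine Finset.sum_congr rfl fun i _ => integral_congr_ae (Eventually.of_forall fun z => ?_)
  simp only [LinearMap.adjoint_inner_left]
  exact real_inner_comm _ _
end

section
/- Let V ⊆ ℝ^d be a linear subspace of dimension ℓ and let ν be a positive Radon measure on ℝ^d that is V-translation-invariant, i.e., (τ_v)_# ν = ν for every translation τ_v(y) = y + v with v ∈ V. Then, identifying ℝ^d with V × V^⊥, there exists a positive Radon measure ν̃ on V^⊥ such that ν is the product measure (H^ℓ restricted to V) ⊗ ν̃; in particular, for all Borel sets A ⊆ V and B ⊆ V^⊥, ν(A + B) = H^ℓ(A) · ν̃(B). -/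
/-!
Write `E = ℝ^d`, let `P`, `Q` be the orthogonal projections onto `V` and `Vᗮ`, let `h = ℋ^ℓ` on `V`,
which is an additive Haar measure of `V`, and let `c = h (ball 0 1) ∈ (0, ∞)`.  The transverse measure
is `ν̃ = c⁻¹ • Q_# (ν ⌞ P⁻¹ (ball 0 1))`: the normalised
projection of the mass `ν` gives to the unit tube around `Vᗮ`.

For measurable `S`, Tonelli together with the invariance of `h` (shift `v` by `P y`) and of `ν`
(shift `y` by `-v`) gives
`∫_V ν {y | P y ∈ ball 0 1, v + Q y ∈ S} dh(v) = ∫_S h {v | P y - v ∈ ball 0 1} dν(y) = c ν(S)`,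
which is the product formula (`lintegral_slab_eq`).  The formula for `A + B` follows since
`(a, b) ↦ a + b` is injective on `V × Vᗮ`, where the product measure is concentrated.
-/

open MeasureTheory Metric Filter
open scoped ENNReal Topology Pointwise

/-- The Tonelli computation behind the product structure: integrating over `v ∈ V` the `ν`-mass of the
points of the unit tube whose `Vᗮ`-component, shifted by `v`, lands in `S`, recovers `ν S` up to
the factor `h (ball 0 1)`. -/
lemma lintegral_slab_eq {d : ℕ} (V : Submodule ℝ (EuclideanSpace ℝ (Fin d)))
    (ν : Measure (EuclideanSpace ℝ (Fin d))) [SFinite ν]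
    (hinv : ∀ v ∈ V, Measure.map (fun y => y + v) ν = ν)
    (h : Measure V) [h.IsAddHaarMeasure]
    (S : Set (EuclideanSpace ℝ (Fin d))) (hS : MeasurableSet S) :
    ∫⁻ v, ν {y | V.orthogonalProjectionOnto y ∈ ball (0 : V) 1 ∧
      (v : EuclideanSpace ℝ (Fin d)) + (y - V.orthogonalProjectionOnto y) ∈ S} ∂h
      = h (ball 0 1) * ν S := by
  set P := V.orthogonalProjectionOnto with hP
  have hPm : Measurable P := P.continuous.measurable
  have hb : MeasurableSet (ball (0 : V) 1) := measurableSet_ball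
  let f : V → ℝ≥0∞ := (ball (0 : V) 1).indicator 1
  let g : EuclideanSpace ℝ (Fin d) → ℝ≥0∞ := S.indicator 1
  have hf : Measurable f := measurable_one.indicator hb
  have hg : Measurable g := measurable_one.indicator hS
  have hPv : ∀ v : V, P (v : EuclideanSpace ℝ (Fin d)) = v := fun v => by
    simp [hP]
  calc ∫⁻ v, ν {y | P y ∈ ball (0 : V) 1 ∧ (v : EuclideanSpace ℝ (Fin d)) + (y - P y) ∈ S} ∂h
      = ∫⁻ v, ∫⁻ y, f (P y) * g ((v : EuclideanSpace ℝ (Fin d)) + (y - P y)) ∂ν ∂h := by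
        refine lintegral_congr fun v => ?_
        have hm : MeasurableSet {y | P y ∈ ball (0 : V) 1 ∧
            (v : EuclideanSpace ℝ (Fin d)) + (y - P y) ∈ S} :=
          (hPm hb).inter ((by fun_prop : Measurable fun y : EuclideanSpace ℝ (Fin d) =>
            (v : EuclideanSpace ℝ (Fin d)) + (y - P y)) hS)
        rw [← lintegral_indicator_one hm]
        refine lintegral_congr fun y => ?_
        by_cases h1 : P y ∈ ball (0 : V) 1 <;>
          by_cases h2 : (v : EuclideanSpace ℝ (Fin d)) + (y - P y) ∈ S <;>
          simp [f, g, Set.indicator, h1, h2, -mem_ball]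
    _ = ∫⁻ y, ∫⁻ v, f (P y) * g ((v : EuclideanSpace ℝ (Fin d)) + (y - P y)) ∂h ∂ν := by
        rw [lintegral_lintegral_swap]
        exact Measurable.aemeasurable (by fun_prop)
    _ = ∫⁻ y, ∫⁻ v, f (P y) * g ((v : EuclideanSpace ℝ (Fin d)) + y) ∂h ∂ν := by
        refine lintegral_congr fun y => ?_
        rw [← lintegral_add_right_eq_self (fun v : V => f (P y) *
          g ((v : EuclideanSpace ℝ (Fin d)) + (y - P y))) (P y)]
        refine lintegral_congr fun v => ?_
        congr 2
        push_cast
        abel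
    _ = ∫⁻ v, ∫⁻ y, f (P y) * g ((v : EuclideanSpace ℝ (Fin d)) + y) ∂ν ∂h := by
        rw [lintegral_lintegral_swap]
        exact Measurable.aemeasurable (by fun_prop)
    _ = ∫⁻ v, ∫⁻ y, f (P y - v) * g y ∂ν ∂h := by
        refine lintegral_congr fun v => ?_
        conv_rhs => rw [← hinv v v.2]
        rw [lintegral_map (by fun_prop) (by fun_prop)]
        refine lintegral_congr fun y => ?_
        rw [map_add, hPv, add_sub_cancel_right, add_comm y]
    _ = ∫⁻ y, ∫⁻ v, f (P y - v) * g y ∂h ∂ν := by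
        rw [lintegral_lintegral_swap]
        exact Measurable.aemeasurable (by fun_prop)
    _ = ∫⁻ y, h (ball 0 1) * g y ∂ν := by
        refine lintegral_congr fun y => ?_
        rw [lintegral_mul_const _ (by fun_prop), lintegral_sub_left_eq_self f (P y),
          lintegral_indicator_one hb]
    _ = h (ball 0 1) * ν S := by
        rw [lintegral_const_mul _ hg, lintegral_indicator_one hS]

/-- **Structure of translation-invariant measures.** Let `V ⊆ ℝ^d` be an `ℓ`-dimensional linear
subspace and let `ν` be a positive Radon measure on `ℝ^d` that is `V`-translation-invariant,
i.e. `(τ_v)_# ν = ν` for every `v ∈ V`.  Then, identifying `ℝ^d ≅ V × Vᗮ` via addition, there is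
a positive Radon measure `ν̃` concentrated on `Vᗮ` such that `ν = (ℋ^ℓ ⌞ V) ⊗ ν̃`; in
particular `ν(A + B) = ℋ^ℓ(A) · ν̃(B)` for all Borel `A ⊆ V` and `B ⊆ Vᗮ`. -/
theorem invariant_measure_is_product {d ℓ : ℕ}
    (V : Submodule ℝ (EuclideanSpace ℝ (Fin d))) (hV : Module.finrank ℝ V = ℓ)
    (ν : Measure (EuclideanSpace ℝ (Fin d))) [IsFiniteMeasureOnCompacts ν]
    (hinv : ∀ v ∈ V, Measure.map (fun y => y + v) ν = ν) :
    ∃ νt : Measure (EuclideanSpace ℝ (Fin d)),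
      νt ((Vᗮ : Set (EuclideanSpace ℝ (Fin d)))ᶜ) = 0 ∧
      ν = Measure.map (fun p : EuclideanSpace ℝ (Fin d) × EuclideanSpace ℝ (Fin d) => p.1 + p.2)
        ((μH[(ℓ : ℝ)].restrict (V : Set (EuclideanSpace ℝ (Fin d)))).prod νt) ∧
      ∀ A B : Set (EuclideanSpace ℝ (Fin d)), MeasurableSet A → MeasurableSet B →
        A ⊆ (V : Set (EuclideanSpace ℝ (Fin d))) → B ⊆ (Vᗮ : Set (EuclideanSpace ℝ (Fin d))) →
        ν (A + B) = μH[(ℓ : ℝ)] A * νt B := by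
  subst hV
  let h : Measure V := μH[(Module.finrank ℝ V : ℝ)]
  have hHaar : h.IsAddHaarMeasure := inferInstance
  have hres : (μH[(Module.finrank ℝ V : ℝ)] : Measure (EuclideanSpace ℝ (Fin d))).restrict
      (V : Set (EuclideanSpace ℝ (Fin d))) = h.map Subtype.val := by
    have := (isometry_subtype_coe (s := (V : Set (EuclideanSpace ℝ (Fin d))))).map_hausdorffMeasure
      (d := (Module.finrank ℝ V : ℝ)) (Or.inl (Nat.cast_nonneg _))
    rw [Subtype.range_coe] at this
    exact this.symm
  set P := V.orthogonalProjectionOnto with hP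
  have hPm : Measurable P := P.continuous.measurable
  have hb : MeasurableSet (ball (0 : V) 1) := measurableSet_ball
  let Q : EuclideanSpace ℝ (Fin d) → EuclideanSpace ℝ (Fin d) := fun y => y - P y
  have hQm : Measurable Q := by fun_prop
  have hQ : ∀ y, Q y ∈ Vᗮ := fun y => V.sub_starProjection_mem_orthogonal y
  have hVm : MeasurableSet (V : Set (EuclideanSpace ℝ (Fin d))) :=
    V.closed_of_finiteDimensional.measurableSet
  have hVom : MeasurableSet (Vᗮ : Set (EuclideanSpace ℝ (Fin d))) :=
    Vᗮ.closed_of_finiteDimensional.measurableSet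
  have hc0 : h (ball 0 1) ≠ 0 := (measure_ball_pos h 0 one_pos).ne'
  have hct : h (ball 0 1) ≠ ∞ := measure_ball_lt_top.ne
  -- Only `SFinite νt` matters below; it is inherited from `ν` under restriction, `map`, scaling.
  let νt : Measure (EuclideanSpace ℝ (Fin d)) :=
    (h (ball 0 1))⁻¹ • (ν.restrict (P ⁻¹' ball 0 1)).map Q
  have hνt : ∀ B, MeasurableSet B → νt B = (h (ball 0 1))⁻¹ * ν (Q ⁻¹' B ∩ P ⁻¹' ball 0 1) := by
    intro B hB
    simp only [νt, Measure.smul_apply, smul_eq_mul]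
    rw [Measure.map_apply hQm hB, Measure.restrict_apply (hQm hB)]
  have hsf : SFinite νt := inferInstance
  have hnull : νt ((Vᗮ : Set (EuclideanSpace ℝ (Fin d)))ᶜ) = 0 := by
    rw [hνt _ hVom.compl]
    have : Q ⁻¹' ((Vᗮ : Set (EuclideanSpace ℝ (Fin d)))ᶜ) = ∅ := by
      ext y; simpa using hQ y
    simp [this]
  have hadd : Measurable
      (fun p : EuclideanSpace ℝ (Fin d) × EuclideanSpace ℝ (Fin d) => p.1 + p.2) := by fun_prop
  have hsH : SFinite ((μH[(Module.finrank ℝ V : ℝ)] :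
      Measure (EuclideanSpace ℝ (Fin d))).restrict (V : Set (EuclideanSpace ℝ (Fin d)))) := by
    rw [hres]; infer_instance
  have hprod : ν = Measure.map
      (fun p : EuclideanSpace ℝ (Fin d) × EuclideanSpace ℝ (Fin d) => p.1 + p.2)
      ((μH[(Module.finrank ℝ V : ℝ)].restrict
        (V : Set (EuclideanSpace ℝ (Fin d)))).prod νt) := by
    ext S hS
    rw [Measure.map_apply hadd hS, Measure.prod_apply (hadd hS), hres,
      lintegral_map (measurable_measure_prodMk_left (hadd hS)) measurable_subtype_coe]
    have key := lintegral_slab_eq V ν hinv h S hS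
    have : ∀ v : V, νt (Prod.mk (v : EuclideanSpace ℝ (Fin d)) ⁻¹'
        ((fun p : EuclideanSpace ℝ (Fin d) × EuclideanSpace ℝ (Fin d) => p.1 + p.2) ⁻¹' S))
        = (h (ball 0 1))⁻¹ * ν {y | P y ∈ ball (0 : V) 1 ∧
          (v : EuclideanSpace ℝ (Fin d)) + (y - P y) ∈ S} := by
      intro v
      rw [hνt _ (measurable_prodMk_left (hadd hS)), Set.inter_comm]
      rfl
    simp_rw [this]
    rw [lintegral_const_mul' _ _ (ENNReal.inv_ne_top.2 hc0), key, ← mul_assoc,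
      ENNReal.inv_mul_cancel hc0 hct, one_mul]
  refine ⟨νt, hnull, hprod, fun A B hA hB hAV hBV => ?_⟩
  have hPQ : ∀ a ∈ V, ∀ b ∈ Vᗮ, (P (a + b) : EuclideanSpace ℝ (Fin d)) = a ∧ Q (a + b) = b := by
    intro a ha b hb
    have h1 : (P (a + b) : EuclideanSpace ℝ (Fin d)) = a :=
      Submodule.eq_starProjection_of_mem_of_inner_eq_zero ha
        (fun w hw => by
          rw [add_sub_cancel_left, real_inner_comm]
          exact hb w hw)
    exact ⟨h1, by simp only [Q, h1, add_sub_cancel_left]⟩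
  have hAB : A + B = {y | (P y : EuclideanSpace ℝ (Fin d)) ∈ A ∧ Q y ∈ B} := by
    ext y
    constructor
    · rintro ⟨a, ha, b, hb, rfl⟩
      obtain ⟨h1, h2⟩ := hPQ a (hAV ha) b (hBV hb)
      exact ⟨by simpa only [h1] using ha, by simpa only [h2] using hb⟩
    · rintro ⟨h1, h2⟩
      exact ⟨_, h1, _, h2, add_sub_cancel _ _⟩
  have hABm : MeasurableSet (A + B) := by
    rw [hAB]
    exact ((measurable_subtype_coe.comp hPm) hA).inter (hQm hB)
  rw [hprod, Measure.map_apply hadd hABm, ← Measure.restrict_eq_self _ hAV,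
    ← Measure.prod_prod]
  refine measure_congr ?_
  have e1 := (Measure.quasiMeasurePreserving_fst (μ := (μH[(Module.finrank ℝ V : ℝ)] :
    Measure (EuclideanSpace ℝ (Fin d))).restrict (V : Set (EuclideanSpace ℝ (Fin d))))
    (ν := νt)).ae (ae_restrict_mem hVm)
  have e2 := (Measure.quasiMeasurePreserving_snd (μ := (μH[(Module.finrank ℝ V : ℝ)] :
    Measure (EuclideanSpace ℝ (Fin d))).restrict (V : Set (EuclideanSpace ℝ (Fin d))))
    (ν := νt)).ae (show ∀ᵐ y ∂νt, y ∈ Vᗮ from hnull)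
  filter_upwards [e1, e2] with p h1 h2
  obtain ⟨h3, h4⟩ := hPQ _ h1 _ h2
  refine propext ?_
  change p.1 + p.2 ∈ A + B ↔ p.1 ∈ A ∧ p.2 ∈ B
  rw [hAB, Set.mem_ofPred_eq, h3, h4]
end
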